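/- arXiv:1507.00681 — 2 statements merged into one kernel-verified Lean document; each statement's English description precedes it below -/
import Mathlib

section
/- For every integer n ≥ 2 there exist R* > 0 and t₁ ∈ (0, T_{R*}) such that the shooting solution satisfies x_{R*}(t₁) = y_{R*}(t₁), θ_{R*}(t₁) = −5π/4, x_{R*}(t) > y_{R*}(t) > 0 for all t ∈ (0, t₁), and t ↦ (x_{R*}(t), y_{R*}(t)) is injective on [0, t₁]; that is, the geodesic segment starts and ends on the diagonal {x = y}, meets the diagonal orthogonally at both endpoints, and lies strictly below the diagonal in between. -/
/-- The shooting solution of the self-shrinker profile system (with `m = n`) on `[0, T)`: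
`x' = cos θ`, `y' = sin θ`, `θ' = (x/2 − (n−1)/x)·sin θ + ((n−1)/y − y/2)·cos θ`,
with `x, y > 0`, and initial conditions `x 0 = y 0 = R/√2`, `θ 0 = −π/4`. -/
def ShootingSol (n : ℕ) (R T : ℝ) (x y θ : ℝ → ℝ) : Prop :=
  0 < T ∧ x 0 = R / Real.sqrt 2 ∧ y 0 = R / Real.sqrt 2 ∧ θ 0 = -(Real.pi / 4) ∧
  ∀ t ∈ Set.Ico 0 T, 0 < x t ∧ 0 < y t ∧
    HasDerivAt x (Real.cos (θ t)) t ∧ HasDerivAt y (Real.sin (θ t)) t ∧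
    HasDerivAt θ ((x t / 2 - ((n : ℝ) - 1) / x t) * Real.sin (θ t)
      + (((n : ℝ) - 1) / y t - y t / 2) * Real.cos (θ t)) t

/-!
Use the rotated coordinates `d = (x - y) / √2`, `s = (x + y) / √2`, put `a = n - 1`, and look for
the segment traversed backwards: shoot orthogonally from the diagonal `{d = 0}` at a height
`r = s 0 < 2√a`, let the tangent angle `φ` start from `0`, and say that the excursion closes if the
curve returns to the diagonal before `φ` exceeds `π`. The task is to find `r` with `φ = π` at the
return.

An excursion turns left until `φ = π / 2`, and from then on moves back towards the diagonal without
ever reaching `φ = π` before it returns. A priori bounds make the set of heights whose excursion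
closes closed, and a return with `φ < π` is transversal, hence stable. So, if no excursion ended
with `φ = π`, the heights whose excursion closes would fill an interval as soon as they contain its
lower end. For small `r` the excursion closes, by Sturm comparison with the linearization at the
diagonal. For `r ^ 2 = 4 * a - 1 / 50` it does not: it would reach `d ^ 2 ≥ 2` outside the
self-shrinking sphere `ρ = 0`, and Wronskian identities based on `L ρ = -ρ`, where
`L f = (w f')' / w` for the weight `w` of the weighted length, rule out a return from there.
-/

open Real Set Filter Topology

section Calculus

variable {f f' : ℝ → ℝ} {u v : ℝ}

lemma le_of_hasDerivAt_nonpos (huv : u ≤ v) (hf : ∀ t ∈ Icc u v, HasDerivAt f (f' t) t)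
    (hf' : ∀ t ∈ Ioo u v, f' t ≤ 0) : f v ≤ f u :=
  antitoneOn_of_hasDerivWithinAt_nonpos (convex_Icc u v) (HasDerivAt.continuousOn hf)
    (fun t ht => (hf t (interior_subset ht)).hasDerivWithinAt)
    (fun t ht => hf' t (by rwa [interior_Icc] at ht))
    (left_mem_Icc.2 huv) (right_mem_Icc.2 huv) huv

lemma le_of_hasDerivAt_nonneg (huv : u ≤ v) (hf : ∀ t ∈ Icc u v, HasDerivAt f (f' t) t)
    (hf' : ∀ t ∈ Ioo u v, 0 ≤ f' t) : f u ≤ f v :=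
  neg_le_neg_iff.1 <| le_of_hasDerivAt_nonpos (f := -f) huv (fun t ht => (hf t ht).neg)
    fun t ht => neg_nonpos.2 (hf' t ht)

lemma lt_of_hasDerivAt_pos (huv : u < v) (hf : ∀ t ∈ Icc u v, HasDerivAt f (f' t) t)
    (hf' : ∀ t ∈ Ioo u v, 0 < f' t) : f u < f v :=
  strictMonoOn_of_hasDerivWithinAt_pos (convex_Icc u v) (HasDerivAt.continuousOn hf)
    (fun t ht => (hf t (interior_subset ht)).hasDerivWithinAt)
    (fun t ht => hf' t (by rwa [interior_Icc] at ht))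
    (left_mem_Icc.2 huv.le) (right_mem_Icc.2 huv.le) huv

lemma lt_of_hasDerivAt_neg (huv : u < v) (hf : ∀ t ∈ Icc u v, HasDerivAt f (f' t) t)
    (hf' : ∀ t ∈ Ioo u v, f' t < 0) : f v < f u :=
  neg_lt_neg_iff.1 <| lt_of_hasDerivAt_pos (f := -f) huv (fun t ht => (hf t ht).neg)
    fun t ht => neg_pos.2 (hf' t ht)

lemma exists_first_exit {X : Type*} [TopologicalSpace X] {g : ℝ → X} {U : Set X}
    (hg : ContinuousOn g (Icc u v)) (hU : IsOpen U) (hu : g u ∈ U) (hv : ∃ t ∈ Icc u v, g t ∉ U) :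
    ∃ τ ∈ Ioc u v, g τ ∉ U ∧ ∀ t ∈ Ico u τ, g t ∈ U := by
  have hcompact : IsCompact (Icc u v ∩ g ⁻¹' Uᶜ) :=
    isCompact_Icc.of_isClosed_subset
      (hg.preimage_isClosed_of_isClosed isClosed_Icc hU.isClosed_compl) inter_subset_left
  obtain ⟨τ, ⟨hτ, hgτ⟩, hmin⟩ := hcompact.exists_isLeast hv
  exact ⟨τ, ⟨hτ.1.lt_of_ne fun h => hgτ (h ▸ hu), hτ.2⟩, hgτ, fun t ht =>
    not_not.1 fun hgt => (hmin ⟨⟨ht.1, ht.2.le.trans hτ.2⟩, hgt⟩).not_gt ht.2⟩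

lemma exists_first_zero (hf : ContinuousOn f (Icc u v)) (hu : 0 < f u)
    (hv : ∃ t ∈ Icc u v, f t ≤ 0) : ∃ τ ∈ Ioc u v, f τ = 0 ∧ ∀ t ∈ Ico u τ, 0 < f t := by
  obtain ⟨τ, hτ, hfτ, hpos⟩ := exists_first_exit hf isOpen_Ioi hu
    (hv.imp fun t ht => ht.imp_right not_lt.2)
  obtain ⟨t, ht, hft⟩ := intermediate_value_Icc' hτ.1.le (hf.mono (Icc_subset_Icc_right hτ.2))
    ⟨not_lt.1 hfτ, hu.le⟩
  obtain rfl : t = τ := ht.2.eq_of_not_lt fun hlt => (hpos t ⟨ht.1, hlt⟩).ne' hft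
  exact ⟨t, hτ, hft, hpos⟩

lemma deriv_nonpos_of_forall_Ioo_le {c : ℝ} (huv : u < v) (hle : ∀ t ∈ Ioo u v, f v ≤ f t)
    (hf : HasDerivAt f c v) : c ≤ 0 := by
  by_contra! hc
  have hslope : ∀ᶠ t in 𝓝[<] v, 0 < slope f v t :=
    ((hasDerivAt_iff_tendsto_slope.1 hf).eventually (lt_mem_nhds hc)).filter_mono
      (nhdsWithin_mono _ fun t ht => ne_of_lt ht)
  obtain ⟨t, hpos, ht⟩ := (hslope.and (Ioo_mem_nhdsLT huv)).exists
  rw [slope_def_field] at hpos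
  exact hpos.not_ge
    (div_nonpos_of_nonneg_of_nonpos (sub_nonneg.2 (hle t ht)) (sub_nonpos.2 ht.2.le))

/- Take `γ = g t₀` at a zero `t₀` of `ρ` if there is one, and `γ = g v` otherwise. -/
lemma exists_le_forall_mul_sub_nonneg {ρ g : ℝ → ℝ} (huv : u ≤ v) (hρ : MonotoneOn ρ (Icc u v))
    (hg : MonotoneOn g (Icc u v)) (hcont : ContinuousOn ρ (Icc u v)) (hu : ρ u ≤ 0) :
    ∃ γ ≤ g v, ∀ t ∈ Icc u v, 0 ≤ ρ t * (g t - γ) := by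
  have hv := right_mem_Icc.2 huv
  rcases le_total (ρ v) 0 with hρv | hρv
  · exact ⟨g v, le_rfl, fun t ht => mul_nonneg_of_nonpos_of_nonpos ((hρ ht hv ht.2).trans hρv)
      (sub_nonpos.2 (hg ht hv ht.2))⟩
  · obtain ⟨t₀, ht₀, hz⟩ := intermediate_value_Icc huv hcont ⟨hu, hρv⟩
    refine ⟨g t₀, hg ht₀ hv ht₀.2, fun t ht => ?_⟩
    rcases le_total t t₀ with h | h
    · exact mul_nonneg_of_nonpos_of_nonpos (hz ▸ hρ ht ht₀ h) (sub_nonpos.2 (hg ht ht₀ h))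
    · exact mul_nonneg (hz ▸ hρ ht₀ ht h) (sub_nonneg.2 (hg ht₀ ht h))

end Calculus

section Trigonometry

variable {x : ℝ}

lemma one_le_cos_add_sin (h0 : 0 ≤ x) (h1 : x ≤ π / 2) : 1 ≤ cos x + sin x := by
  have hsin := sin_nonneg_of_nonneg_of_le_pi h0 (by linarith [pi_pos])
  have hcos := cos_nonneg_of_mem_Icc (x := x) ⟨by linarith [pi_pos], h1⟩
  nlinarith [sin_sq_add_cos_sq x, mul_nonneg hsin hcos]

lemma one_le_sin_sub_cos (h0 : π / 2 ≤ x) (h1 : x ≤ π) : 1 ≤ sin x - cos x := by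
  have := one_le_cos_add_sin (x := π - x) (by linarith) (by linarith)
  rw [cos_pi_sub, sin_pi_sub] at this
  linarith

end Trigonometry

/-- The curvature of a profile curve in the rotated coordinates `d = (x - y) / √2`,
`s = (x + y) / √2`, for which `s² - d² = 2xy`, as a function of the position and of the angle `φ`
of the tangent with the `d`-axis. Here `a = n - 1`. -/
noncomputable def profileCurvature (a d s φ : ℝ) : ℝ :=
  sin φ * d * (1 / 2 + 2 * a / (s ^ 2 - d ^ 2)) + cos φ * s * (2 * a / (s ^ 2 - d ^ 2) - 1 / 2)

/-- The density `(s² - d²)ᵃ exp(-(s² + d²) / 4)` of the weighted length whose geodesics are the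
profile curves. -/
noncomputable def profileWeight (a d s : ℝ) : ℝ :=
  exp (a * log (s ^ 2 - d ^ 2) - (s ^ 2 + d ^ 2) / 4)

/-- The function `ρ = s² + d² - (4a + 2)`, which vanishes on the self-shrinking sphere. With
`L f = (w f')' / w` along a profile curve of weight `w`, it satisfies `L ρ = -ρ`. -/
def sphereDefect (a d s : ℝ) : ℝ := s ^ 2 + d ^ 2 - (4 * a + 2)

/-- The function `g = (L + 1) (1 - d² / 2)`, where `L f = (w f')' / w` along a profile curve of
weight `w`. -/
noncomputable def tiltDensity (a d s φ : ℝ) : ℝ :=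
  sin φ ^ 2 + 2 * a / (s ^ 2 - d ^ 2) * d ^ 2

/-- At time `t` the curve `(d, s)` with tangent angle `φ` satisfies the rotated profile system and
lies in the open quadrant `{|d| < s}`, which corresponds to `{x, y > 0}`. -/
structure IsProfileAt (a : ℝ) (d s φ : ℝ → ℝ) (t : ℝ) : Prop where
  hasDerivAt_d : HasDerivAt d (cos (φ t)) t
  hasDerivAt_s : HasDerivAt s (sin (φ t)) t
  hasDerivAt_φ : HasDerivAt φ (profileCurvature a (d t) (s t) (φ t)) t
  s_pos : 0 < s t
  gap_pos : 0 < s t ^ 2 - d t ^ 2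

/-- A profile curve on `[0, T]` leaving the diagonal `{d = 0}` orthogonally. -/
structure ProfileArc (a : ℝ) (d s φ : ℝ → ℝ) (T : ℝ) : Prop where
  T_nonneg : 0 ≤ T
  d_zero : d 0 = 0
  φ_zero : φ 0 = 0
  isProfileAt : ∀ t ∈ Icc 0 T, IsProfileAt a d s φ t

variable {a : ℝ} {d s φ : ℝ → ℝ} {t T : ℝ}

lemma profileWeight_pos (a d s : ℝ) : 0 < profileWeight a d s := exp_pos _

namespace IsProfileAt

lemma d_lt_s (h : IsProfileAt a d s φ t) : d t < s t :=
  lt_of_pow_lt_pow_left₀ 2 h.s_pos.le (sub_pos.1 h.gap_pos)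

lemma hasDerivAt_gap (h : IsProfileAt a d s φ t) :
    HasDerivAt (fun t => s t ^ 2 - d t ^ 2) (2 * (s t * sin (φ t) - d t * cos (φ t))) t :=
  ((h.hasDerivAt_s.fun_pow 2).fun_sub (h.hasDerivAt_d.fun_pow 2)).congr_deriv (by push_cast; ring)

lemma hasDerivAt_profileWeight (h : IsProfileAt a d s φ t) :
    HasDerivAt (fun t => profileWeight a (d t) (s t)) (profileWeight a (d t) (s t) *
      (sin (φ t) * s t * (2 * a / (s t ^ 2 - d t ^ 2) - 1 / 2)
        - cos (φ t) * d t * (2 * a / (s t ^ 2 - d t ^ 2) + 1 / 2))) t := by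
  have hgap := h.gap_pos.ne'
  refine (((h.hasDerivAt_gap.log hgap).const_mul a).fun_sub (((h.hasDerivAt_s.fun_pow 2).fun_add
    (h.hasDerivAt_d.fun_pow 2)).div_const 4)).exp.congr_deriv ?_
  rw [profileWeight]
  congr 1
  push_cast
  field_simp
  ring

lemma hasDerivAt_weight_mul_cos (h : IsProfileAt a d s φ t) :
    HasDerivAt (fun t => profileWeight a (d t) (s t) * cos (φ t))
      (-(profileWeight a (d t) (s t) * (d t * (1 / 2 + 2 * a / (s t ^ 2 - d t ^ 2))))) t := by
  refine (h.hasDerivAt_profileWeight.fun_mul h.hasDerivAt_φ.cos).congr_deriv ?_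
  unfold profileCurvature
  linear_combination -(profileWeight a (d t) (s t) *
    (d t * (1 / 2 + 2 * a / (s t ^ 2 - d t ^ 2)))) * sin_sq_add_cos_sq (φ t)

lemma hasDerivAt_weight_mul_sin (h : IsProfileAt a d s φ t) :
    HasDerivAt (fun t => profileWeight a (d t) (s t) * sin (φ t))
      (profileWeight a (d t) (s t) * (s t * (2 * a / (s t ^ 2 - d t ^ 2) - 1 / 2))) t := by
  refine (h.hasDerivAt_profileWeight.fun_mul h.hasDerivAt_φ.sin).congr_deriv ?_
  unfold profileCurvature
  linear_combination (profileWeight a (d t) (s t) *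
    (s t * (2 * a / (s t ^ 2 - d t ^ 2) - 1 / 2))) * sin_sq_add_cos_sq (φ t)

/- `s cos φ - d sin φ` is the support function `⟨X, N⟩` of the curve. -/
lemma hasDerivAt_weight_mul_support (h : IsProfileAt a d s φ t) :
    HasDerivAt (fun t => profileWeight a (d t) (s t) * (s t * cos (φ t) - d t * sin (φ t)))
      (-(profileWeight a (d t) (s t) * (s t * d t * (4 * a / (s t ^ 2 - d t ^ 2))))) t := by
  refine ((h.hasDerivAt_s.fun_mul h.hasDerivAt_weight_mul_cos).fun_sub
    (h.hasDerivAt_d.fun_mul h.hasDerivAt_weight_mul_sin)).congr_deriv ?_ |>.congr_of_eventuallyEq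
      (.of_forall fun t => by ring)
  ring

lemma hasDerivAt_sphereDefect (h : IsProfileAt a d s φ t) :
    HasDerivAt (fun t => sphereDefect a (d t) (s t))
      (2 * (s t * sin (φ t) + d t * cos (φ t))) t :=
  (((h.hasDerivAt_s.fun_pow 2).fun_add (h.hasDerivAt_d.fun_pow 2)).sub_const
    (4 * a + 2)).congr_deriv (by push_cast; ring)

/- This is `L ρ = -ρ`, since `s sin φ + d cos φ = ρ' / 2`. -/
lemma hasDerivAt_weight_mul_radial (h : IsProfileAt a d s φ t) :
    HasDerivAt (fun t => profileWeight a (d t) (s t) * (s t * sin (φ t) + d t * cos (φ t)))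
      (-(profileWeight a (d t) (s t) * sphereDefect a (d t) (s t) / 2)) t := by
  have hgap : 2 * a / (s t ^ 2 - d t ^ 2) * (s t ^ 2 - d t ^ 2) = 2 * a :=
    div_mul_cancel₀ _ h.gap_pos.ne'
  refine ((h.hasDerivAt_s.fun_mul h.hasDerivAt_weight_mul_sin).fun_add
    (h.hasDerivAt_d.fun_mul h.hasDerivAt_weight_mul_cos)).congr_deriv ?_ |>.congr_of_eventuallyEq
      (.of_forall fun t => by ring)
  unfold sphereDefect
  linear_combination profileWeight a (d t) (s t) * (sin_sq_add_cos_sq (φ t) + hgap)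

/- The differentiated function is the Wronskian `w (f ρ' - ρ f')` of `f = 1 - γ - d² / 2`
and `ρ`, for which `(L + 1) f = g - γ` and `(L + 1) ρ = 0`. -/
lemma hasDerivAt_wronskian_sq (h : IsProfileAt a d s φ t) (γ : ℝ) :
    HasDerivAt (fun t => profileWeight a (d t) (s t) *
        ((1 - γ - d t ^ 2 / 2) * (2 * (s t * sin (φ t) + d t * cos (φ t)))
          + sphereDefect a (d t) (s t) * (d t * cos (φ t))))
      (-(profileWeight a (d t) (s t) *
        (sphereDefect a (d t) (s t) * (tiltDensity a (d t) (s t) (φ t) - γ)))) t := by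
  refine ((((((h.hasDerivAt_d.fun_pow 2).div_const 2).const_sub (1 - γ)).fun_mul
    (h.hasDerivAt_weight_mul_radial.const_mul 2)).fun_add (h.hasDerivAt_sphereDefect.fun_mul
      (h.hasDerivAt_d.fun_mul h.hasDerivAt_weight_mul_cos))).congr_deriv ?_).congr_of_eventuallyEq
        (.of_forall fun t => by ring)
  unfold tiltDensity
  push_cast
  linear_combination profileWeight a (d t) (s t) * sphereDefect a (d t) (s t) *
    sin_sq_add_cos_sq (φ t)

/- The same Wronskian identity for `f = 2ds`, where `(L + 1) f = 4 sin φ cos φ`. -/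
lemma hasDerivAt_wronskian_mul (h : IsProfileAt a d s φ t) :
    HasDerivAt (fun t => profileWeight a (d t) (s t) *
        (2 * d t * s t * (2 * (s t * sin (φ t) + d t * cos (φ t)))
          - sphereDefect a (d t) (s t) * (2 * (s t * cos (φ t) + d t * sin (φ t)))))
      (-(4 * profileWeight a (d t) (s t) * sphereDefect a (d t) (s t) *
        (sin (φ t) * cos (φ t)))) t := by
  refine (((((h.hasDerivAt_d.const_mul 2).fun_mul h.hasDerivAt_s).fun_mul
    (h.hasDerivAt_weight_mul_radial.const_mul 2)).fun_sub (h.hasDerivAt_sphereDefect.fun_mul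
      (((h.hasDerivAt_s.fun_mul h.hasDerivAt_weight_mul_cos).fun_add
        (h.hasDerivAt_d.fun_mul h.hasDerivAt_weight_mul_sin)).const_mul 2))).congr_deriv
          ?_).congr_of_eventuallyEq (.of_forall fun t => by ring)
  ring

lemma hasDerivAt_tiltDensity (h : IsProfileAt a d s φ t) :
    HasDerivAt (fun t => tiltDensity a (d t) (s t) (φ t))
      (2 * sin (φ t) * cos (φ t) * profileCurvature a (d t) (s t) (φ t)
        + 4 * a * d t * s t * (s t * cos (φ t) - d t * sin (φ t)) / (s t ^ 2 - d t ^ 2) ^ 2) t := by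
  have hgap := h.gap_pos.ne'
  refine ((h.hasDerivAt_φ.sin.fun_pow 2).fun_add (((hasDerivAt_const t (2 * a)).fun_div
    h.hasDerivAt_gap hgap).fun_mul (h.hasDerivAt_d.fun_pow 2))).congr_deriv ?_
  push_cast
  field_simp
  ring

end IsProfileAt

namespace ProfileArc

lemma restrict {T' : ℝ} (h : ProfileArc a d s φ T) (h0 : 0 ≤ T') (hle : T' ≤ T) :
    ProfileArc a d s φ T' :=
  ⟨h0, h.d_zero, h.φ_zero, fun t ht => h.isProfileAt t ⟨ht.1, ht.2.trans hle⟩⟩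

lemma zero_mem (h : ProfileArc a d s φ T) : (0 : ℝ) ∈ Icc 0 T := left_mem_Icc.2 h.T_nonneg

lemma T_mem (h : ProfileArc a d s φ T) : T ∈ Icc 0 T := right_mem_Icc.2 h.T_nonneg

lemma s_zero_pos (h : ProfileArc a d s φ T) : 0 < s 0 := (h.isProfileAt 0 h.zero_mem).s_pos

lemma continuousOn_d (h : ProfileArc a d s φ T) : ContinuousOn d (Icc 0 T) :=
  HasDerivAt.continuousOn fun t ht => (h.isProfileAt t ht).hasDerivAt_d

lemma continuousOn_s (h : ProfileArc a d s φ T) : ContinuousOn s (Icc 0 T) :=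
  HasDerivAt.continuousOn fun t ht => (h.isProfileAt t ht).hasDerivAt_s

lemma continuousOn_φ (h : ProfileArc a d s φ T) : ContinuousOn φ (Icc 0 T) :=
  HasDerivAt.continuousOn fun t ht => (h.isProfileAt t ht).hasDerivAt_φ

lemma continuousOn_curvature (h : ProfileArc a d s φ T) :
    ContinuousOn (fun t => profileCurvature a (d t) (s t) (φ t)) (Icc 0 T) := by
  have hd := h.continuousOn_d
  have hs := h.continuousOn_s
  have hφ := h.continuousOn_φ
  have hdiv : ContinuousOn (fun t => 2 * a / (s t ^ 2 - d t ^ 2)) (Icc 0 T) :=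
    continuousOn_const.div ((hs.pow 2).sub (hd.pow 2)) fun t ht => (h.isProfileAt t ht).gap_pos.ne'
  unfold profileCurvature
  fun_prop

lemma φ_pos_of_curvature_pos (h : ProfileArc a d s φ T)
    (hk : ∀ t ∈ Ico 0 T, 0 < profileCurvature a (d t) (s t) (φ t)) : ∀ t ∈ Ioc 0 T, 0 < φ t := by
  intro t ht
  rw [← h.φ_zero]
  exact lt_of_hasDerivAt_pos ht.1
    (fun r hr => (h.isProfileAt r ⟨hr.1, hr.2.trans ht.2⟩).hasDerivAt_φ)
    fun r hr => hk r ⟨hr.1.le, hr.2.trans_le ht.2⟩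

lemma φ_nonneg (h : ProfileArc a d s φ T) (hφ : ∀ t ∈ Ioc 0 T, 0 < φ t) :
    ∀ t ∈ Icc 0 T, 0 ≤ φ t := by
  intro t ht
  rcases ht.1.eq_or_lt with rfl | h0
  · exact h.φ_zero.ge
  · exact (hφ t ⟨h0, ht.2⟩).le

lemma antitoneOn_weight_mul_support (h : ProfileArc a d s φ T) (ha : 0 ≤ a)
    (hd : ∀ t ∈ Icc 0 T, 0 ≤ d t) :
    AntitoneOn (fun t => profileWeight a (d t) (s t) * (s t * cos (φ t) - d t * sin (φ t)))
      (Icc 0 T) := by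
  intro t₁ h₁ t₂ h₂ h₁₂
  refine le_of_hasDerivAt_nonpos h₁₂ (fun r hr =>
    (h.isProfileAt r (Icc_subset_Icc h₁.1 h₂.2 hr)).hasDerivAt_weight_mul_support) fun r hr => ?_
  have hr' := Icc_subset_Icc h₁.1 h₂.2 (Ioo_subset_Icc_self hr)
  have := (h.isProfileAt r hr').gap_pos
  have := (h.isProfileAt r hr').s_pos
  have := hd r hr'
  have := profileWeight_pos a (d r) (s r)
  rw [neg_nonpos]
  positivity

lemma support_pos_of_support_pos_right (h : ProfileArc a d s φ T) (ha : 0 ≤ a)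
    (hd : ∀ t ∈ Icc 0 T, 0 ≤ d t) (hT : 0 < s T * cos (φ T) - d T * sin (φ T)) :
    ∀ t ∈ Icc 0 T, 0 < s t * cos (φ t) - d t * sin (φ t) := fun _ ht =>
  pos_of_mul_pos_right ((mul_pos (profileWeight_pos a (d T) (s T)) hT).trans_le
    (h.antitoneOn_weight_mul_support ha hd ht h.T_mem ht.2)) (profileWeight_pos _ _ _).le

lemma monotoneOn_sphereDefect (h : ProfileArc a d s φ T) (hd : ∀ t ∈ Icc 0 T, 0 ≤ d t)
    (hsin : ∀ t ∈ Icc 0 T, 0 ≤ sin (φ t)) (hcos : ∀ t ∈ Icc 0 T, 0 ≤ cos (φ t)) :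
    MonotoneOn (fun t => sphereDefect a (d t) (s t)) (Icc 0 T) := by
  intro t₁ h₁ t₂ h₂ h₁₂
  refine le_of_hasDerivAt_nonneg h₁₂ (fun r hr =>
    (h.isProfileAt r (Icc_subset_Icc h₁.1 h₂.2 hr)).hasDerivAt_sphereDefect) fun r hr => ?_
  have hr' := Icc_subset_Icc h₁.1 h₂.2 (Ioo_subset_Icc_self hr)
  have := (h.isProfileAt r hr').s_pos
  have := hd r hr'
  have := hsin r hr'
  have := hcos r hr'
  positivity

lemma monotoneOn_tiltDensity (h : ProfileArc a d s φ T) (ha : 0 ≤ a)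
    (hd : ∀ t ∈ Icc 0 T, 0 ≤ d t) (hsin : ∀ t ∈ Icc 0 T, 0 ≤ sin (φ t))
    (hcos : ∀ t ∈ Icc 0 T, 0 ≤ cos (φ t))
    (hk : ∀ t ∈ Ico 0 T, 0 ≤ profileCurvature a (d t) (s t) (φ t))
    (hsupp : ∀ t ∈ Icc 0 T, 0 ≤ s t * cos (φ t) - d t * sin (φ t)) :
    MonotoneOn (fun t => tiltDensity a (d t) (s t) (φ t)) (Icc 0 T) := by
  intro t₁ h₁ t₂ h₂ h₁₂
  refine le_of_hasDerivAt_nonneg h₁₂ (fun r hr =>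
    (h.isProfileAt r (Icc_subset_Icc h₁.1 h₂.2 hr)).hasDerivAt_tiltDensity) fun r hr => ?_
  have hr' := Icc_subset_Icc h₁.1 h₂.2 (Ioo_subset_Icc_self hr)
  have := (h.isProfileAt r hr').s_pos
  have := (h.isProfileAt r hr').gap_pos
  have := hd r hr'
  have := hsin r hr'
  have := hcos r hr'
  have := hk r ⟨hr'.1, hr.2.trans_le h₂.2⟩
  have := hsupp r hr'
  positivity

end ProfileArc

/-- A profile arc which starts on the diagonal inside the Clifford torus radius `2√a`, stays
strictly on one side of the diagonal, and whose tangent angle has not exceeded `π`. -/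
structure Excursion (a : ℝ) (d s φ : ℝ → ℝ) (T : ℝ) : Prop extends ProfileArc a d s φ T where
  a_pos : 0 < a
  s_zero_sq_lt : s 0 ^ 2 < 4 * a
  d_pos : ∀ t ∈ Ioo 0 T, 0 < d t
  φ_le_pi : ∀ t ∈ Icc 0 T, φ t ≤ π

section CurvatureZero

variable {D S θ : ℝ}

lemma exists_scale_of_profileCurvature_eq_zero (ha : 0 < a) (hD : 0 < D) (hgap : 0 < S ^ 2 - D ^ 2)
    (hcos : 0 < cos θ) (hk : profileCurvature a D S θ = 0) :
    ∃ l > 0, cos θ = l * (D * (S ^ 2 - D ^ 2 + 4 * a)) ∧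
      sin θ = l * (S * (S ^ 2 - D ^ 2 - 4 * a)) := by
  have hpos : 0 < D * (S ^ 2 - D ^ 2 + 4 * a) := by positivity
  refine ⟨cos θ / (D * (S ^ 2 - D ^ 2 + 4 * a)), by positivity, by field_simp, ?_⟩
  rw [div_mul_eq_mul_div, eq_div_iff hpos.ne']
  have hcancel : 2 * a / (S ^ 2 - D ^ 2) * (S ^ 2 - D ^ 2) = 2 * a := div_mul_cancel₀ _ hgap.ne'
  unfold profileCurvature at hk
  linear_combination 2 * (S ^ 2 - D ^ 2) * hk - (2 * sin θ * D + 2 * cos θ * S) * hcancel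

lemma support_pos_of_profileCurvature_eq_zero (ha : 0 < a) (hD : 0 < D) (hS : 0 < S)
    (hgap : 0 < S ^ 2 - D ^ 2) (hcos : 0 < cos θ) (hk : profileCurvature a D S θ = 0) :
    0 < S * cos θ - D * sin θ := by
  obtain ⟨l, hl, hc, hs⟩ := exists_scale_of_profileCurvature_eq_zero ha hD hgap hcos hk
  have : S * cos θ - D * sin θ = 8 * a * l * S * D := by rw [hc, hs]; ring
  rw [this]
  positivity

lemma wronskian_pos_of_profileCurvature_eq_zero (ha : 0 < a) (hD : 0 < D) (hS : 0 < S)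
    (hgap : 0 < S ^ 2 - D ^ 2) (hsin : 0 < sin θ) (hcos : 0 < cos θ)
    (hk : profileCurvature a D S θ = 0) :
    0 < (1 - tiltDensity a D S θ - D ^ 2 / 2) * (2 * (S * sin θ + D * cos θ))
      + sphereDefect a D S * (D * cos θ) := by
  obtain ⟨l, hl, hc, hs⟩ := exists_scale_of_profileCurvature_eq_zero ha hD hgap hcos hk
  have hgap' : 0 < S ^ 2 - D ^ 2 - 4 * a :=
    pos_of_mul_pos_right (pos_of_mul_pos_right (hs ▸ hsin) hl.le) hS.le
  have hcancel : 2 * a / (S ^ 2 - D ^ 2) * (S ^ 2 - D ^ 2) = 2 * a := div_mul_cancel₀ _ hgap.ne'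
  have hunit := sin_sq_add_cos_sq θ
  have hradial : S * sin θ + D * cos θ = l * (S ^ 2 - D ^ 2) * (S ^ 2 + D ^ 2 - 4 * a) := by
    rw [hs, hc]; ring
  have htilt : 1 - tiltDensity a D S θ - D ^ 2 / 2
      = cos θ ^ 2 - D ^ 2 / 2 - 2 * a / (S ^ 2 - D ^ 2) * D ^ 2 := by
    unfold tiltDensity; linear_combination -hunit
  have key : (1 - tiltDensity a D S θ - D ^ 2 / 2) * (2 * (S * sin θ + D * cos θ))
      + sphereDefect a D S * (D * cos θ)
      = 16 * a * l ^ 3 * D ^ 2 * S ^ 2 * (S ^ 2 - D ^ 2 + 4 * a) * (S ^ 2 - D ^ 2 - 4 * a) := by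
    rw [hs, hc] at hunit
    rw [htilt, hradial, hc]
    unfold sphereDefect
    linear_combination (-2 * D ^ 2 * l * (S ^ 2 + D ^ 2 - 4 * a)) * hcancel
      + 2 * l * D ^ 2 * (S ^ 2 - D ^ 2 + 4 * a) * hunit
  rw [key]
  positivity

end CurvatureZero

namespace Excursion

lemma restrict {T' : ℝ} (h : Excursion a d s φ T) (h0 : 0 ≤ T') (hle : T' ≤ T) :
    Excursion a d s φ T' :=
  ⟨h.toProfileArc.restrict h0 hle, h.a_pos, h.s_zero_sq_lt,
    fun t ht => h.d_pos t ⟨ht.1, ht.2.trans_le hle⟩, fun t ht => h.φ_le_pi t ⟨ht.1, ht.2.trans hle⟩⟩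

lemma d_nonneg (h : Excursion a d s φ T) : ∀ t ∈ Icc 0 T, 0 ≤ d t := by
  rcases h.T_nonneg.eq_or_lt with rfl | hT
  · rintro t ⟨h0, h1⟩
    rw [le_antisymm h1 h0, h.d_zero]
  · intro t ht
    have hmaps : MapsTo d (Ioo 0 T) (Ici 0) := fun r hr => (h.d_pos r hr).le
    have hcont := (h.continuousOn_d t ht).mono Ioo_subset_Icc_self
    rw [← closure_Ioo hT.ne] at ht
    exact closure_minimal subset_rfl isClosed_Ici (hcont.mem_closure ht hmaps)

lemma curvature_zero_pos (h : Excursion a d s φ T) :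
    0 < profileCurvature a (d 0) (s 0) (φ 0) := by
  have hs := h.s_zero_pos
  have : 1 / 2 < 2 * a / s 0 ^ 2 := by
    rw [lt_div_iff₀ (by positivity)]
    linarith [h.s_zero_sq_lt]
  rw [profileCurvature, h.d_zero, h.φ_zero, sin_zero, cos_zero]
  ring_nf at this ⊢
  nlinarith

/- At a first zero `T` of the curvature, choose `γ ≤ g T` with `ρ (g - γ) ≥ 0` on `[0, T]`. The
Wronskian of `1 - γ - d² / 2` and `ρ` vanishes at `0` and decreases, but is positive at `T`. -/
lemma curvature_ne_zero (h : Excursion a d s φ T) (hT : 0 < T) (hd : 0 < d T)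
    (hφ : ∀ t ∈ Icc 0 T, φ t < π / 2)
    (hk : ∀ t ∈ Ico 0 T, 0 < profileCurvature a (d t) (s t) (φ t)) :
    profileCurvature a (d T) (s T) (φ T) ≠ 0 := by
  intro hkT
  have hφ_pos := h.φ_pos_of_curvature_pos hk
  have hφ_nonneg := h.φ_nonneg hφ_pos
  have hsin : ∀ t ∈ Icc 0 T, 0 ≤ sin (φ t) := fun t ht =>
    sin_nonneg_of_nonneg_of_le_pi (hφ_nonneg t ht) (h.φ_le_pi t ht)
  have hcos : ∀ t ∈ Icc 0 T, 0 < cos (φ t) := fun t ht =>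
    cos_pos_of_mem_Ioo ⟨by linarith [hφ_nonneg t ht, pi_pos], hφ t ht⟩
  have hsinT : 0 < sin (φ T) := sin_pos_of_pos_of_lt_pi (hφ_pos T ⟨hT, le_rfl⟩)
    (by linarith [hφ T h.T_mem, pi_pos])
  obtain ⟨-, -, -, hsT, hgapT⟩ := h.isProfileAt T h.T_mem
  have hsupp := h.support_pos_of_support_pos_right h.a_pos.le h.d_nonneg
    (support_pos_of_profileCurvature_eq_zero h.a_pos hd hsT hgapT (hcos T h.T_mem) hkT)
  obtain ⟨γ, hγ, hγ_mul⟩ := exists_le_forall_mul_sub_nonneg hT.le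
    (h.monotoneOn_sphereDefect h.d_nonneg hsin fun t ht => (hcos t ht).le)
    (h.monotoneOn_tiltDensity h.a_pos.le h.d_nonneg hsin (fun t ht => (hcos t ht).le)
      (fun t ht => (hk t ht).le) fun t ht => (hsupp t ht).le)
    (HasDerivAt.continuousOn fun t ht => (h.isProfileAt t ht).hasDerivAt_sphereDefect)
    (by rw [sphereDefect, h.d_zero]; linarith [h.s_zero_sq_lt])
  have hdecr := le_of_hasDerivAt_nonpos hT.le
    (fun r hr => (h.isProfileAt r hr).hasDerivAt_wronskian_sq γ) fun r hr =>
      neg_nonpos.2 (mul_nonneg (profileWeight_pos _ _ _).le (hγ_mul r (Ioo_subset_Icc_self hr)))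
  simp only [h.d_zero, h.φ_zero, sin_zero, zero_mul, mul_zero, add_zero] at hdecr
  have hpos := wronskian_pos_of_profileCurvature_eq_zero h.a_pos hd hsT hgapT hsinT
    (hcos T h.T_mem) hkT
  have hradial : 0 ≤ (tiltDensity a (d T) (s T) (φ T) - γ)
      * (2 * (s T * sin (φ T) + d T * cos (φ T))) := by
    have := hcos T h.T_mem
    have := sub_nonneg.2 hγ
    positivity
  exact hdecr.not_gt (mul_pos (profileWeight_pos _ _ _) (by linarith))

theorem curvature_pos (h : Excursion a d s φ T) (hφ : ∀ t ∈ Ico 0 T, φ t < π / 2) :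
    ∀ t ∈ Ico 0 T, 0 < profileCurvature a (d t) (s t) (φ t) := by
  intro t ht
  by_contra! hneg
  obtain ⟨τ, hτ, hkτ, hk⟩ := exists_first_zero
    ((h.restrict ht.1 ht.2.le).continuousOn_curvature) h.curvature_zero_pos
    ⟨t, right_mem_Icc.2 ht.1, hneg⟩
  have hτT : τ < T := hτ.2.trans_lt ht.2
  exact (h.restrict hτ.1.le hτT.le).curvature_ne_zero hτ.1 (h.d_pos τ ⟨hτ.1, hτT⟩)
    (fun r hr => hφ r ⟨hr.1, hr.2.trans_lt hτT⟩) hk hkτ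

end Excursion

/-- The time `u ∈ [0, T]` at which a curve with tangent angle `φ` stops moving away from the
diagonal, with the convention `u = T` if this does not happen before `T`. -/
structure IsApex (φ : ℝ → ℝ) (T u : ℝ) : Prop where
  mem : u ∈ Icc 0 T
  lt_before : ∀ t ∈ Ico 0 u, φ t < π / 2
  lt_after : ∀ t ∈ Ioc u T, π / 2 < φ t
  le_apex : φ u ≤ π / 2
  eq_of_lt : u < T → φ u = π / 2

namespace IsApex

variable {u : ℝ}

lemma le_of_le (hu : IsApex φ T u) (ht : 0 ≤ t) (htu : t ≤ u) : φ t ≤ π / 2 := by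
  rcases htu.eq_or_lt with rfl | hlt
  · exact hu.le_apex
  · exact (hu.lt_before t ⟨ht, hlt⟩).le

end IsApex

lemma forall_pi_div_two_lt_of_cos_neg {u v : ℝ} (hφ : ContinuousOn φ (Icc u v))
    (hu : φ u = π / 2) (hcos : ∀ t ∈ Ioc u v, cos (φ t) < 0) : ∀ t ∈ Ioc u v, π / 2 < φ t := by
  intro t ht
  by_contra! hle
  have hneg : φ t < 0 := by
    by_contra! h0
    exact (cos_nonneg_of_mem_Icc ⟨by linarith [pi_pos], hle⟩).not_gt (hcos t ht)
  obtain ⟨r, hr, hφr⟩ := intermediate_value_Icc' ht.1.le (hφ.mono (Icc_subset_Icc_right ht.2))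
    ⟨hneg.le, hu ▸ pi_div_two_pos.le⟩
  have hur : u ≠ r := fun h => pi_div_two_pos.ne' (by rw [← hu, h, hφr])
  have := hcos r ⟨hr.1.lt_of_ne hur, hr.2.trans ht.2⟩
  rw [hφr, cos_zero] at this
  linarith

namespace Excursion

variable {u : ℝ}

/- Past a point where `φ = π / 2` the function `w cos φ` decreases from `0`. -/
lemma cos_neg_of_pi_div_two (h : Excursion a d s φ T) (hu : 0 ≤ u) (hφ : φ u = π / 2) :
    ∀ t ∈ Ioc u T, cos (φ t) < 0 := by
  intro t ht
  have hdecr := lt_of_hasDerivAt_neg ht.1 (fun r hr =>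
    (h.isProfileAt r ⟨hu.trans hr.1, hr.2.trans ht.2⟩).hasDerivAt_weight_mul_cos) fun r hr => by
      have := h.d_pos r ⟨hu.trans_lt hr.1, hr.2.trans_le ht.2⟩
      have := (h.isProfileAt r ⟨hu.trans hr.1.le, hr.2.le.trans ht.2⟩).gap_pos
      have := profileWeight_pos a (d r) (s r)
      have := h.a_pos
      rw [neg_lt_zero]
      positivity
  rw [hφ, cos_pi_div_two, mul_zero] at hdecr
  exact neg_of_mul_neg_right hdecr (profileWeight_pos _ _ _).le

theorem exists_isApex (h : Excursion a d s φ T) : ∃ u, IsApex φ T u := by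
  by_cases hlow : ∀ t ∈ Icc 0 T, φ t < π / 2
  · exact ⟨T, h.T_mem, fun t ht => hlow t (Ico_subset_Icc_self ht),
      fun t ht => absurd ht.1 ht.2.not_gt, (hlow T h.T_mem).le, fun hlt => absurd hlt (lt_irrefl T)⟩
  · push Not at hlow
    obtain ⟨r, hr, hφr⟩ := hlow
    obtain ⟨u, hu, hφu, hbefore⟩ := exists_first_zero (f := fun t => π / 2 - φ t)
      (continuousOn_const.sub h.continuousOn_φ) (by simp [h.φ_zero, pi_pos])
      ⟨r, hr, sub_nonpos.2 hφr⟩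
    have hφu : φ u = π / 2 := (sub_eq_zero.1 hφu).symm
    exact ⟨u, ⟨hu.1.le, hu.2⟩, fun t ht => sub_pos.1 (hbefore t ht),
      forall_pi_div_two_lt_of_cos_neg (h.continuousOn_φ.mono (Icc_subset_Icc_left hu.1.le)) hφu
        (h.cos_neg_of_pi_div_two hu.1.le hφu), hφu.le, fun _ => hφu⟩

lemma φ_pos (h : Excursion a d s φ T) : ∀ t ∈ Ioc 0 T, 0 < φ t := by
  obtain ⟨u, hu⟩ := h.exists_isApex
  intro t ht
  rcases le_or_gt t u with htu | hut
  · have hu' := h.restrict hu.mem.1 hu.mem.2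
    exact hu'.φ_pos_of_curvature_pos (hu'.curvature_pos hu.lt_before) t ⟨ht.1, htu⟩
  · exact pi_div_two_pos.trans (hu.lt_after t ⟨hut, ht.2⟩)

lemma sin_nonneg (h : Excursion a d s φ T) (ht : t ∈ Icc 0 T) : 0 ≤ sin (φ t) :=
  sin_nonneg_of_nonneg_of_le_pi (h.φ_nonneg h.φ_pos t ht) (h.φ_le_pi t ht)

lemma monotoneOn_s (h : Excursion a d s φ T) : MonotoneOn s (Icc 0 T) := fun _ h₁ _ h₂ h₁₂ =>
  le_of_hasDerivAt_nonneg h₁₂ (fun r hr =>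
    (h.isProfileAt r (Icc_subset_Icc h₁.1 h₂.2 hr)).hasDerivAt_s) fun _ hr =>
      h.sin_nonneg (Icc_subset_Icc h₁.1 h₂.2 (Ioo_subset_Icc_self hr))

lemma cos_nonneg_of_le_apex (h : Excursion a d s φ T) (hu : IsApex φ T u) (ht : t ∈ Icc 0 u) :
    0 ≤ cos (φ t) :=
  cos_nonneg_of_mem_Icc ⟨by linarith [h.φ_nonneg h.φ_pos t ⟨ht.1, ht.2.trans hu.mem.2⟩, pi_pos],
    hu.le_of_le ht.1 ht.2⟩

lemma cos_nonpos_of_apex_lt (h : Excursion a d s φ T) (hu : IsApex φ T u) (ht : t ∈ Ioc u T) :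
    cos (φ t) ≤ 0 :=
  cos_nonpos_of_pi_div_two_le_of_le (hu.lt_after t ht).le
    (by linarith [h.φ_le_pi t ⟨hu.mem.1.trans ht.1.le, ht.2⟩, pi_pos])

lemma monotoneOn_d (h : Excursion a d s φ T) (hu : IsApex φ T u) : MonotoneOn d (Icc 0 u) :=
  fun _ h₁ _ h₂ h₁₂ => le_of_hasDerivAt_nonneg h₁₂
    (fun r hr => (h.isProfileAt r ⟨h₁.1.trans hr.1, hr.2.trans (h₂.2.trans hu.mem.2)⟩).hasDerivAt_d)
    fun _ hr => h.cos_nonneg_of_le_apex hu ⟨h₁.1.trans hr.1.le, hr.2.le.trans h₂.2⟩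

lemma antitoneOn_d (h : Excursion a d s φ T) (hu : IsApex φ T u) : AntitoneOn d (Icc u T) :=
  fun _ h₁ _ h₂ h₁₂ => le_of_hasDerivAt_nonpos h₁₂
    (fun r hr => (h.isProfileAt r ⟨hu.mem.1.trans (h₁.1.trans hr.1), hr.2.trans h₂.2⟩).hasDerivAt_d)
    fun _ hr => h.cos_nonpos_of_apex_lt hu ⟨h₁.1.trans_lt hr.1, hr.2.le.trans h₂.2⟩

lemma d_le_apex (h : Excursion a d s φ T) (hu : IsApex φ T u) (ht : t ∈ Icc 0 T) : d t ≤ d u := by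
  rcases le_total t u with htu | hut
  · exact h.monotoneOn_d hu ⟨ht.1, htu⟩ (right_mem_Icc.2 hu.mem.1) htu
  · exact h.antitoneOn_d hu (left_mem_Icc.2 hu.mem.2) ⟨hut, ht.2⟩ hut

/- `s + d` grows with speed at least `1` before the apex, and so does `s - d` after it. -/
theorem T_le_three_mul (h : Excursion a d s φ T) : T ≤ 3 * s T := by
  obtain ⟨u, hu⟩ := h.exists_isApex
  have hup : s 0 + d 0 - 0 ≤ s u + d u - u := by
    refine le_of_hasDerivAt_nonneg (f := fun t => s t + d t - t) hu.mem.1 (fun r hr =>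
      have hr' := h.isProfileAt r ⟨hr.1, hr.2.trans hu.mem.2⟩
      (hr'.hasDerivAt_s.add hr'.hasDerivAt_d).sub (hasDerivAt_id r)) fun r hr => ?_
    linarith [one_le_cos_add_sin (h.φ_pos r ⟨hr.1, hr.2.le.trans hu.mem.2⟩).le
      (hu.lt_before r ⟨hr.1.le, hr.2⟩).le]
  have hdown : s u - d u - u ≤ s T - d T - T := by
    refine le_of_hasDerivAt_nonneg (f := fun t => s t - d t - t) hu.mem.2 (fun r hr =>
      have hr' := h.isProfileAt r ⟨hu.mem.1.trans hr.1, hr.2⟩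
      (hr'.hasDerivAt_s.sub hr'.hasDerivAt_d).sub (hasDerivAt_id r)) fun r hr => ?_
    linarith [one_le_sin_sub_cos (hu.lt_after r ⟨hr.1, hr.2.le⟩).le
      (h.φ_le_pi r ⟨hu.mem.1.trans hr.1.le, hr.2.le⟩)]
  linarith [(h.isProfileAt u hu.mem).d_lt_s, h.monotoneOn_s hu.mem h.T_mem hu.mem.2, h.s_zero_pos,
    h.d_zero, h.d_nonneg T h.T_mem]

end Excursion

/-- A nontrivial excursion which has returned to the diagonal. -/
structure ClosedExcursion (a : ℝ) (d s φ : ℝ → ℝ) (T : ℝ) : Prop extends Excursion a d s φ T where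
  T_pos : 0 < T
  d_T : d T = 0

namespace ClosedExcursion

lemma d_T_div_two_pos (h : ClosedExcursion a d s φ T) : 0 < d (T / 2) :=
  h.d_pos _ ⟨half_pos h.T_pos, half_lt_self h.T_pos⟩

variable {u : ℝ}

lemma d_apex_pos (h : ClosedExcursion a d s φ T) (hu : IsApex φ T u) : 0 < d u :=
  h.d_T_div_two_pos.trans_le
    (h.d_le_apex hu ⟨(half_pos h.T_pos).le, (half_lt_self h.T_pos).le⟩)

lemma apex_mem (h : ClosedExcursion a d s φ T) (hu : IsApex φ T u) : u ∈ Ioo 0 T := by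
  have hd := h.d_apex_pos hu
  refine ⟨hu.mem.1.lt_of_ne ?_, hu.mem.2.lt_of_ne ?_⟩
  · rintro rfl
    exact hd.ne' h.d_zero
  · rintro rfl
    exact hd.ne' h.d_T

lemma φ_apex (h : ClosedExcursion a d s φ T) (hu : IsApex φ T u) : φ u = π / 2 :=
  hu.eq_of_lt (h.apex_mem hu).2

/- At a first zero `τ` of `ρ` after the apex `u` we would have `ρ' ≤ 0`, so that the Wronskian of
`2ds` and `ρ` would be nonpositive at `τ`; but it is positive at `u` and increases up to `τ`. -/
lemma sphereDefect_pos_of_apex_le (h : ClosedExcursion a d s φ T) (hu : IsApex φ T u)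
    (hρ : 0 < sphereDefect a (d u) (s u)) : ∀ t ∈ Icc u T, 0 < sphereDefect a (d t) (s t) := by
  have hsub : Icc u T ⊆ Icc 0 T := Icc_subset_Icc_left hu.mem.1
  intro t ht
  by_contra! hneg
  obtain ⟨τ, hτ, hρτ, hpos⟩ := exists_first_zero (HasDerivAt.continuousOn fun t ht =>
    (h.isProfileAt t (hsub ht)).hasDerivAt_sphereDefect) hρ ⟨t, ht, hneg⟩
  have hτ' : τ ∈ Icc 0 T := hsub (Ioc_subset_Icc_self hτ)
  have hradial : 2 * (s τ * sin (φ τ) + d τ * cos (φ τ)) ≤ 0 :=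
    deriv_nonpos_of_forall_Ioo_le hτ.1
      (fun t ht => hρτ.trans_le (hpos t (Ioo_subset_Ico_self ht)).le)
      (h.isProfileAt τ hτ').hasDerivAt_sphereDefect
  have hmono := le_of_hasDerivAt_nonneg hτ.1.le (fun r hr =>
    (h.isProfileAt r (hsub ⟨hr.1, hr.2.trans hτ.2⟩)).hasDerivAt_wronskian_mul) fun r hr => by
      have hr' : r ∈ Ioc u T := ⟨hr.1, hr.2.le.trans hτ.2⟩
      have := hpos r (Ioo_subset_Ico_self hr)
      have := profileWeight_pos a (d r) (s r)
      rw [neg_nonneg]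
      exact mul_nonpos_of_nonneg_of_nonpos (by positivity) (mul_nonpos_of_nonneg_of_nonpos
        (h.sin_nonneg (hsub (Ioc_subset_Icc_self hr'))) (h.cos_nonpos_of_apex_lt hu hr'))
  rw [hρτ, h.φ_apex hu, cos_pi_div_two, sin_pi_div_two, zero_mul, sub_zero] at hmono
  have hright : profileWeight a (d τ) (s τ) * (2 * d τ * s τ *
      (2 * (s τ * sin (φ τ) + d τ * cos (φ τ)))) ≤ 0 :=
    mul_nonpos_of_nonneg_of_nonpos (profileWeight_pos _ _ _).le (mul_nonpos_of_nonneg_of_nonpos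
      (by have := h.d_nonneg τ hτ'; have := (h.isProfileAt τ hτ').s_pos; positivity) hradial)
  have hleft : 0 < profileWeight a (d u) (s u) *
      (2 * d u * (s u ^ 2 - d u ^ 2 + 4 * a + 2)) := by
    have := profileWeight_pos a (d u) (s u)
    have := h.d_apex_pos hu
    have := (h.isProfileAt u hu.mem).gap_pos
    have := h.a_pos
    positivity
  unfold sphereDefect at hmono
  linarith

theorem sphereDefect_apex_nonpos (h : ClosedExcursion a d s φ T) (hu : IsApex φ T u)
    (hd : 2 ≤ d u ^ 2) : sphereDefect a (d u) (s u) ≤ 0 := by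
  by_contra! hρ
  have hsub : Icc u T ⊆ Icc 0 T := Icc_subset_Icc_left hu.mem.1
  have hpos := h.sphereDefect_pos_of_apex_le hu hρ
  have hdecr := lt_of_hasDerivAt_neg (h.apex_mem hu).2 (fun r hr =>
    (h.isProfileAt r (hsub hr)).hasDerivAt_wronskian_sq 0) fun r hr => by
      have := hpos r (Ioo_subset_Icc_self hr)
      have := (h.isProfileAt r (hsub (Ioo_subset_Icc_self hr))).gap_pos
      have := h.d_pos r ⟨hu.mem.1.trans_lt hr.1, hr.2⟩
      have := profileWeight_pos a (d r) (s r)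
      have := h.a_pos
      rw [tiltDensity, sub_zero, neg_lt_zero]
      positivity
  simp only [h.d_T, h.φ_apex hu, cos_pi_div_two, sin_pi_div_two] at hdecr
  have hT : 0 ≤ profileWeight a 0 (s T) * (s T * sin (φ T)) :=
    mul_nonneg (profileWeight_pos _ _ _).le
      (mul_nonneg (h.isProfileAt T h.T_mem).s_pos.le (h.sin_nonneg h.T_mem))
  have hu' : 0 ≤ (d u ^ 2 - 2) * (profileWeight a (d u) (s u) * s u) :=
    mul_nonneg (sub_nonneg.2 hd)
      (mul_nonneg (profileWeight_pos _ _ _).le (h.isProfileAt u hu.mem).s_pos.le)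
  linarith

end ClosedExcursion

lemma mul_profileCurvature_le {δ D S θ : ℝ} (ha : 1 ≤ a) (hδ : 0 ≤ δ) (hD : 0 ≤ D) (hS : 0 < S)
    (hDδ : D ^ 2 < 4 - δ) (hSδ : 4 * a - δ ≤ S ^ 2) (hsin : 0 ≤ sin θ) (hcos : 0 ≤ cos θ) :
    (4 - δ - D ^ 2) * profileCurvature a D S θ
      ≤ sin θ * D * ((4 - δ - D ^ 2) / 2 + 2) + cos θ * (δ + D ^ 2) := by
  have hgap : 0 < S ^ 2 - D ^ 2 := by linarith
  have hx : 0 ≤ D ^ 2 := sq_nonneg D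
  have hsin_coeff : (4 - δ - D ^ 2) * (2 * a / (S ^ 2 - D ^ 2)) ≤ 2 := by
    rw [← mul_div_assoc, div_le_iff₀ hgap]
    nlinarith [mul_nonneg (sub_nonneg.2 ha) hx, mul_nonneg (sub_nonneg.2 ha) hδ]
  have hS_le : S * (4 - δ - D ^ 2) ≤ 2 * (S ^ 2 - D ^ 2) := by
    rcases le_total 2 S with h2 | h2
    · nlinarith [mul_nonneg hx (sub_nonneg.2 h2)]
    · nlinarith [mul_nonneg (sub_nonneg.2 h2) hgap.le,
        mul_nonneg hS.le (show 0 ≤ S ^ 2 - (4 - δ) by linarith)]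
  have hcos_coeff : (4 - δ - D ^ 2) * (S * (2 * a / (S ^ 2 - D ^ 2) - 1 / 2)) ≤ δ + D ^ 2 := by
    have hform : (4 - δ - D ^ 2) * (S * (2 * a / (S ^ 2 - D ^ 2) - 1 / 2))
        = S * (4 - δ - D ^ 2) * (4 * a - (S ^ 2 - D ^ 2)) / (2 * (S ^ 2 - D ^ 2)) := by
      field_simp
      ring
    rw [hform, div_le_iff₀ (by positivity), mul_comm (δ + D ^ 2)]
    exact (mul_le_mul_of_nonneg_left (by linarith)
      (mul_nonneg hS.le (sub_nonneg.2 hDδ.le))).trans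
        (mul_le_mul_of_nonneg_right hS_le (by positivity))
  unfold profileCurvature
  linarith [mul_le_mul_of_nonneg_left hsin_coeff (mul_nonneg hsin hD),
    mul_le_mul_of_nonneg_left hcos_coeff hcos]

lemma IsProfileAt.hasDerivAt_comparison (h : IsProfileAt a d s φ t) (N δ : ℝ) :
    HasDerivAt (fun t => sin (φ t) * (N - d t ^ 2) * exp (-(d t ^ 2 / 4))
        - (δ * d t + d t ^ 3 / 3))
      (cos (φ t) * (exp (-(d t ^ 2 / 4)) * ((N - d t ^ 2) * profileCurvature a (d t) (s t) (φ t)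
        - sin (φ t) * d t * ((N - d t ^ 2) / 2 + 2)) - (δ + d t ^ 2))) t := by
  have hd := h.hasDerivAt_d
  refine (((h.hasDerivAt_φ.sin.fun_mul ((hd.fun_pow 2).const_sub N)).fun_mul
    ((hd.fun_pow 2).div_const 4).fun_neg.exp).fun_sub
      ((hd.const_mul δ).fun_add ((hd.fun_pow 3).div_const 3))).congr_deriv ?_
  push_cast
  ring

namespace Excursion

variable {u : ℝ}

/- Gronwall's inequality for `sin φ` as a function of `d`, whose derivative is the curvature. -/
lemma mul_exp_apex_le (h : Excursion a d s φ T) (ha : 1 ≤ a) (hu : IsApex φ T u)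
    (hφ : φ u = π / 2) {δ : ℝ} (hs : 4 * a - δ ≤ s 0 ^ 2) (hd : d u ^ 2 < 4 - δ) :
    (4 - δ - d u ^ 2) * exp (-(d u ^ 2 / 4)) ≤ δ * d u + d u ^ 3 / 3 := by
  have hsub : Icc 0 u ⊆ Icc 0 T := Icc_subset_Icc_right hu.mem.2
  have hδ : 0 ≤ δ := by linarith [h.s_zero_sq_lt]
  have hdecr := le_of_hasDerivAt_nonpos hu.mem.1 (fun r hr =>
    (h.isProfileAt r (hsub hr)).hasDerivAt_comparison (4 - δ) δ) fun r hr => by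
      have hr' := Ioo_subset_Icc_self hr
      have hdr := h.d_nonneg r (hsub hr')
      have hcos := h.cos_nonneg_of_le_apex hu hr'
      have hK := mul_profileCurvature_le ha hδ hdr (h.isProfileAt r (hsub hr')).s_pos
        ((pow_le_pow_left₀ hdr (h.d_le_apex hu (hsub hr')) 2).trans_lt hd)
        (hs.trans (pow_le_pow_left₀ h.s_zero_pos.le
          (h.monotoneOn_s h.zero_mem (hsub hr') hr'.1) 2)) (h.sin_nonneg (hsub hr')) hcos
      refine mul_nonpos_of_nonneg_of_nonpos hcos (sub_nonpos.2 ?_)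
      have hexp : exp (-(d r ^ 2 / 4)) ≤ 1 := exp_le_one_iff.2 (by linarith [sq_nonneg (d r)])
      calc exp (-(d r ^ 2 / 4)) * ((4 - δ - d r ^ 2) * profileCurvature a (d r) (s r) (φ r)
            - sin (φ r) * d r * ((4 - δ - d r ^ 2) / 2 + 2))
          ≤ exp (-(d r ^ 2 / 4)) * (cos (φ r) * (δ + d r ^ 2)) :=
            mul_le_mul_of_nonneg_left (by linarith) (exp_pos _).le
        _ ≤ 1 * (1 * (δ + d r ^ 2)) := by gcongr; exact cos_le_one _
        _ = δ + d r ^ 2 := by ring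
  simp only [hφ, h.φ_zero, h.d_zero, sin_pi_div_two, sin_zero] at hdecr
  linarith

lemma two_add_le_sq_d_apex (h : Excursion a d s φ T) (ha : 1 ≤ a) (hu : IsApex φ T u)
    (hφ : φ u = π / 2) (hs : s 0 ^ 2 = 4 * a - 1 / 50) : 2 + 1 / 50 ≤ d u ^ 2 := by
  by_contra! hd
  have hle := h.mul_exp_apex_le ha hu hφ hs.ge (by linarith)
  have hd0 := h.d_nonneg u hu.mem
  have hexp : 0.74 ^ 2 ≤ exp (-(d u ^ 2 / 4)) :=
    calc (0.74 : ℝ) ^ 2 ≤ (-(2.02 / 8) + 1) ^ 2 := by norm_num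
      _ ≤ exp (-(2.02 / 8)) ^ 2 := pow_le_pow_left₀ (by norm_num) (add_one_le_exp _) 2
      _ = exp (-(2.02 / 4)) := by rw [← exp_nat_mul]; norm_num
      _ ≤ exp (-(d u ^ 2 / 4)) := exp_le_exp.2 (by linarith)
  have hd1 : d u < 1.43 := by nlinarith
  have hcube : d u ^ 3 ≤ 1.43 * 2.02 := by
    rw [pow_succ' (d u) 2]
    exact mul_le_mul hd1.le (by linarith) (sq_nonneg _) (by norm_num)
  have hmul : (1.96 : ℝ) * 0.74 ^ 2 ≤ (4 - 1 / 50 - d u ^ 2) * exp (-(d u ^ 2 / 4)) :=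
    mul_le_mul (by linarith) hexp (by norm_num) (by linarith)
  norm_num at hle hmul
  linarith

end Excursion

/- The excursion reaches `d² ≥ 2` outside the self-shrinking sphere. -/
theorem ClosedExcursion.s_zero_sq_ne (h : ClosedExcursion a d s φ T) (ha : 1 ≤ a) :
    s 0 ^ 2 ≠ 4 * a - 1 / 50 := by
  intro hs
  obtain ⟨u, hu⟩ := h.exists_isApex
  have hd := h.two_add_le_sq_d_apex ha hu (h.φ_apex hu) hs
  have hρ := h.sphereDefect_apex_nonpos hu (by linarith)
  have hs0 := h.s_zero_pos
  have hsu : s 0 < s u := lt_of_hasDerivAt_pos (h.apex_mem hu).1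
    (fun r hr => (h.isProfileAt r ⟨hr.1, hr.2.trans hu.mem.2⟩).hasDerivAt_s) fun r hr =>
      sin_pos_of_pos_of_lt_pi (h.φ_pos r ⟨hr.1, hr.2.le.trans hu.mem.2⟩)
        (by linarith [hu.lt_before r ⟨hr.1.le, hr.2⟩, pi_pos])
  unfold sphereDefect at hρ
  nlinarith

lemma IsProfileAt.hasDerivAt_barrier (h : IsProfileAt a d s φ t) (hsum : 0 < s t + d t) :
    HasDerivAt (fun t => φ t + d t * s t / 2 - a * (log (s t + d t) - log (s t - d t)))
      (sin (φ t) * d t * (1 + 4 * a / (s t ^ 2 - d t ^ 2))) t := by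
  have hsub : s t - d t ≠ 0 := (sub_pos.2 h.d_lt_s).ne'
  refine ((h.hasDerivAt_φ.fun_add ((h.hasDerivAt_d.fun_mul h.hasDerivAt_s).div_const 2)).fun_sub
    ((((h.hasDerivAt_s.fun_add h.hasDerivAt_d).log hsum.ne').fun_sub
      ((h.hasDerivAt_s.fun_sub h.hasDerivAt_d).log hsub)).const_mul a)).congr_deriv ?_
  have hsum' := hsum.ne'
  rw [profileCurvature, sq_sub_sq]
  field_simp
  ring

namespace Excursion

variable {u : ℝ}

lemma log_sub_log_le (h : Excursion a d s φ T) (ha : 1 ≤ a) (ht : t ∈ Icc 0 T) :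
    log (s t + d t) - log (s t - d t) ≤ π + s t ^ 2 / 2 := by
  have hsum : ∀ r ∈ Icc 0 T, 0 < s r + d r := fun r hr =>
    add_pos_of_pos_of_nonneg (h.isProfileAt r hr).s_pos (h.d_nonneg r hr)
  have hsub : Icc 0 t ⊆ Icc 0 T := Icc_subset_Icc_right ht.2
  have hbarrier := le_of_hasDerivAt_nonneg ht.1
    (fun r hr => (h.isProfileAt r (hsub hr)).hasDerivAt_barrier (hsum r (hsub hr))) fun r hr => by
      have hr' := hsub (Ioo_subset_Icc_self hr)
      have := h.d_nonneg r hr'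
      have := h.sin_nonneg hr'
      have := (h.isProfileAt r hr').gap_pos
      positivity
  simp only [h.d_zero, h.φ_zero, add_zero, sub_zero, zero_mul, zero_div, sub_self, mul_zero]
    at hbarrier
  have hd := h.d_nonneg t ht
  have hds := (h.isProfileAt t ht).d_lt_s
  have hlog : log (s t - d t) ≤ log (s t + d t) := log_le_log (sub_pos.2 hds) (by linarith)
  nlinarith [h.φ_le_pi t ht, mul_nonneg (sub_nonneg.2 ha) (sub_nonneg.2 hlog),
    mul_nonneg (hd.trans hds.le) (sub_nonneg.2 hds.le)]

lemma sq_mul_exp_le_gap (h : Excursion a d s φ T) (ha : 1 ≤ a) (ht : t ∈ Icc 0 T) :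
    s t ^ 2 * exp (-(π + s t ^ 2 / 2)) ≤ s t ^ 2 - d t ^ 2 := by
  have hd := h.d_nonneg t ht
  have hs := (h.isProfileAt t ht).s_pos
  have hsub : 0 < s t - d t := sub_pos.2 (h.isProfileAt t ht).d_lt_s
  have hexp : (s t + d t) * exp (-(π + s t ^ 2 / 2)) ≤ s t - d t := by
    rw [← exp_log (show 0 < s t + d t by linarith), ← exp_add, ← le_log_iff_exp_le hsub]
    linarith [h.log_sub_log_le ha ht]
  calc s t ^ 2 * exp (-(π + s t ^ 2 / 2))
      ≤ (s t + d t) ^ 2 * exp (-(π + s t ^ 2 / 2)) := by gcongr; linarith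
    _ = (s t + d t) * ((s t + d t) * exp (-(π + s t ^ 2 / 2))) := by ring
    _ ≤ (s t + d t) * (s t - d t) := mul_le_mul_of_nonneg_left hexp (by linarith)
    _ = s t ^ 2 - d t ^ 2 := by ring

lemma s_zero_le (h : Excursion a d s φ T) (ht : t ∈ Icc 0 T) : s 0 ≤ s t :=
  h.monotoneOn_s h.zero_mem ht ht.1

end Excursion

lemma exists_forall_le_gap (ha : 1 ≤ a) {lo : ℝ} (hlo : 0 < lo) (X : ℝ) :
    ∃ q > 0, ∀ {d s φ : ℝ → ℝ} {T : ℝ}, Excursion a d s φ T → lo ≤ s 0 →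
      ∀ t ∈ Icc 0 T, s t ≤ X → q ≤ s t ^ 2 - d t ^ 2 := by
  refine ⟨lo ^ 2 * exp (-(π + X ^ 2 / 2)), by positivity, fun h hlos t ht htX => ?_⟩
  have hs := (h.isProfileAt t ht).s_pos
  have := hlos.trans (h.s_zero_le ht)
  exact le_trans (by gcongr) (h.sq_mul_exp_le_gap ha ht)

lemma exists_forall_le_profileWeight (ha : 1 ≤ a) {lo : ℝ} (hlo : 0 < lo) (X : ℝ) :
    ∃ w > 0, ∀ {d s φ : ℝ → ℝ} {T : ℝ}, Excursion a d s φ T → lo ≤ s 0 →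
      ∀ t ∈ Icc 0 T, s t ≤ X → w ≤ profileWeight a (d t) (s t) := by
  obtain ⟨q, hq, hgap⟩ := exists_forall_le_gap ha hlo X
  refine ⟨exp (a * log q - X ^ 2 / 2), exp_pos _, fun {d s φ T} h hlos t ht htX => exp_le_exp.2 ?_⟩
  have hs := (h.isProfileAt t ht).s_pos
  have hlog := mul_le_mul_of_nonneg_left (log_le_log hq (hgap h hlos t ht htX)) h.a_pos.le
  have hsX : s t ^ 2 ≤ X ^ 2 := pow_le_pow_left₀ hs.le htX 2
  linarith [(h.isProfileAt t ht).gap_pos]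

lemma profileCurvature_le_of_le_half {D S θ lo : ℝ} (ha : 0 ≤ a) (hlo : 0 < lo) (hD : 0 ≤ D)
    (hDlo : D ≤ lo / 2) (hS : lo ≤ S) (hcos : 0 ≤ cos θ) :
    profileCurvature a D S θ ≤ lo + 8 * a / lo := by
  have hSpos : 0 < S := hlo.trans_le hS
  have hgap_ge : S ^ 2 / 2 ≤ S ^ 2 - D ^ 2 := by nlinarith
  have hgap : 0 < S ^ 2 - D ^ 2 := lt_of_lt_of_le (by positivity) hgap_ge
  have hSV : S * (2 * a / (S ^ 2 - D ^ 2)) ≤ 4 * a / lo := by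
    rw [mul_div_assoc', div_le_div_iff₀ hgap hlo]
    nlinarith [mul_le_mul_of_nonneg_left hS (mul_nonneg ha hSpos.le)]
  have hV : 0 ≤ 2 * a / (S ^ 2 - D ^ 2) := by positivity
  have hDV : D * (2 * a / (S ^ 2 - D ^ 2)) ≤ S * (2 * a / (S ^ 2 - D ^ 2)) :=
    mul_le_mul_of_nonneg_right (by linarith) hV
  calc profileCurvature a D S θ
      ≤ sin θ * (D * (1 / 2 + 2 * a / (S ^ 2 - D ^ 2)))
        + cos θ * (S * (2 * a / (S ^ 2 - D ^ 2))) := by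
        unfold profileCurvature
        linarith [mul_nonneg hcos hSpos.le]
    _ ≤ 1 * (D * (1 / 2 + 2 * a / (S ^ 2 - D ^ 2))) + 1 * (S * (2 * a / (S ^ 2 - D ^ 2))) := by
        gcongr
        exacts [sin_le_one θ, cos_le_one θ]
    _ ≤ lo + 8 * a / lo := by
        have : 8 * a / lo = 4 * a / lo + 4 * a / lo := by ring
        linarith

namespace Excursion

variable {u lo : ℝ}

lemma sin_le_mul_d (h : Excursion a d s φ T) (hlo : 0 < lo) (hlos : lo ≤ s 0) (hu : IsApex φ T u)
    (ht : t ∈ Icc 0 u) (hdt : d t ≤ lo / 2) : sin (φ t) ≤ (lo + 8 * a / lo) * d t := by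
  have hsub : Icc 0 t ⊆ Icc 0 T := Icc_subset_Icc_right (ht.2.trans hu.mem.2)
  have hmono := le_of_hasDerivAt_nonneg
    (f := fun t => (lo + 8 * a / lo) * d t - sin (φ t)) ht.1 (fun r hr =>
      ((h.isProfileAt r (hsub hr)).hasDerivAt_d.const_mul _).sub
        (h.isProfileAt r (hsub hr)).hasDerivAt_φ.sin) fun r hr => by
      have hr' := hsub (Ioo_subset_Icc_self hr)
      have hru : r ∈ Icc 0 u := ⟨hr.1.le, hr.2.le.trans ht.2⟩
      have hcos := h.cos_nonneg_of_le_apex hu hru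
      have hK := profileCurvature_le_of_le_half h.a_pos.le hlo (h.d_nonneg r hr')
        ((h.monotoneOn_d hu hru ht hr.2.le).trans hdt) (hlos.trans (h.s_zero_le hr')) hcos
      linarith [mul_le_mul_of_nonneg_left hK hcos]
  simp only [h.d_zero, h.φ_zero, sin_zero, mul_zero, sub_zero] at hmono
  exact sub_nonneg.1 hmono

end Excursion

lemma exists_forall_exists_d_eq (ha : 0 < a) {lo : ℝ} (hlo : 0 < lo) :
    ∃ δ > 0, ∀ {d s φ : ℝ → ℝ} {T u : ℝ}, Excursion a d s φ T → lo ≤ s 0 → IsApex φ T u →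
      φ u = π / 2 → ∃ r ∈ Icc 0 u, d r = δ ∧ s r ≤ s 0 + δ := by
  set K := lo + 8 * a / lo
  have hKpos : 0 < K := by positivity
  refine ⟨min (lo / 2) (1 / (2 * K)), lt_min (by positivity) (by positivity),
    fun {d s φ T u} h hlos hu hφu => ?_⟩
  set δ := min (lo / 2) (1 / (2 * K))
  have hδ : 0 < δ := lt_min (by positivity) (by positivity)
  have hKδ : K * δ ≤ 1 / 2 := by
    have : K * (1 / (2 * K)) = 1 / 2 := by field_simp
    exact (mul_le_mul_of_nonneg_left (min_le_right _ _) hKpos.le).trans this.le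
  have hsin : ∀ t ∈ Icc 0 u, d t ≤ δ → sin (φ t) ≤ 1 / 2 := fun t ht hdt =>
    (h.sin_le_mul_d hlo hlos hu ht (hdt.trans (min_le_left _ _))).trans
      ((mul_le_mul_of_nonneg_left hdt hKpos.le).trans hKδ)
  have hu0 := right_mem_Icc.2 hu.mem.1
  have hdu : δ ≤ d u := by
    by_contra! hlt
    have := hsin u hu0 hlt.le
    norm_num [hφu] at this
  obtain ⟨r, hr, hdr⟩ := intermediate_value_Icc hu.mem.1
    (h.continuousOn_d.mono (Icc_subset_Icc_right hu.mem.2)) ⟨h.d_zero.trans_le hδ.le, hdu⟩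
  refine ⟨r, hr, hdr, ?_⟩
  have hdecr := le_of_hasDerivAt_nonpos (f := fun t => s t - d t) hr.1 (fun t ht =>
    have ht' := h.isProfileAt t ⟨ht.1, ht.2.trans (hr.2.trans hu.mem.2)⟩
    ht'.hasDerivAt_s.sub ht'.hasDerivAt_d) fun t ht => by
      have ht' : t ∈ Icc 0 u := ⟨ht.1.le, ht.2.le.trans hr.2⟩
      have := hsin t ht' ((h.monotoneOn_d hu ht' hr ht.2.le).trans hdr.le)
      nlinarith [h.sin_nonneg ⟨ht'.1, ht'.2.trans hu.mem.2⟩, h.cos_nonneg_of_le_apex hu ht',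
        sin_sq_add_cos_sq (φ t)]
  simp only [h.d_zero, hdr] at hdecr
  linarith

namespace ClosedExcursion

variable {u : ℝ}

lemma sq_d_apex_le (h : ClosedExcursion a d s φ T) (hu : IsApex φ T u) :
    d u ^ 2 ≤ 4 * a + 2 := by
  by_contra! hlt
  have := h.sphereDefect_apex_nonpos hu (by linarith [h.a_pos])
  unfold sphereDefect at this
  linarith [sq_nonneg (s u)]

/- The ratio `d / s` increases as long as the support function is positive. -/
lemma exists_support_nonpos (h : ClosedExcursion a d s φ T) (hu : IsApex φ T u) {r : ℝ}
    (hr : r ∈ Icc 0 u) :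
    ∃ τ ∈ Icc r u, d r * s τ ≤ d u * s r ∧ s τ * cos (φ τ) - d τ * sin (φ τ) ≤ 0 := by
  have hsub : Icc r u ⊆ Icc 0 T := Icc_subset_Icc hr.1 hu.mem.2
  have hs : ∀ t ∈ Icc r u, 0 < s t := fun t ht => (h.isProfileAt t (hsub ht)).s_pos
  have hru := left_mem_Icc.2 hr.2
  rcases le_or_gt (s r * cos (φ r) - d r * sin (φ r)) 0 with hsupp | hsupp
  · exact ⟨r, hru, mul_le_mul_of_nonneg_right (h.d_le_apex hu (hsub hru)) (hs r hru).le, hsupp⟩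
  obtain ⟨τ, hτ, hτ0, hpos⟩ := exists_first_zero
    (f := fun t => s t * cos (φ t) - d t * sin (φ t))
    (((h.continuousOn_s.mul (continuous_cos.comp_continuousOn h.continuousOn_φ)).sub
      (h.continuousOn_d.mul (continuous_sin.comp_continuousOn h.continuousOn_φ))).mono hsub) hsupp
    ⟨u, right_mem_Icc.2 hr.2, by simp [h.φ_apex hu, (h.d_apex_pos hu).le]⟩
  have hτ' := Ioc_subset_Icc_self hτ
  have hmono : d r / s r ≤ d τ / s τ := le_of_hasDerivAt_nonneg hτ.1.le (fun t ht =>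
    have ht' := Icc_subset_Icc_right hτ.2 ht
    have hp := h.isProfileAt t (hsub ht')
    hp.hasDerivAt_d.fun_div hp.hasDerivAt_s (hs t ht').ne') fun t ht =>
      div_nonneg (by linarith [hpos t (Ioo_subset_Ico_self ht)]) (sq_nonneg _)
  rw [div_le_div_iff₀ (hs r hru) (hs τ hτ')] at hmono
  exact ⟨τ, hτ', hmono.trans
    (mul_le_mul_of_nonneg_right (h.d_le_apex hu (hsub hτ')) (hs r hru).le), hτ0.le⟩

/- After `τ` the function `w (s cos φ - d sin φ)` is nonpositive and decreasing; it drops by a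
definite amount either before `s` exceeds `X + 1` or, if it does not, before the apex. -/
lemma weight_mul_support_le (h : ClosedExcursion a d s φ T) (hu : IsApex φ T u) {τ δ w X : ℝ}
    (hτ : τ ∈ Icc 0 u) (hsupp : s τ * cos (φ τ) - d τ * sin (φ τ) ≤ 0) (hδ : 0 < δ)
    (hδd : δ ≤ d τ) (hX : s τ ≤ X) (hw0 : 0 < w)
    (hw : ∀ t ∈ Icc 0 T, s t ≤ X + 1 → w ≤ profileWeight a (d t) (s t)) :
    profileWeight a (d T) (s T) * (s T * cos (φ T) - d T * sin (φ T))
      ≤ -min (w * δ) (w * (s 0 * δ * (4 * a / (X + 1) ^ 2))) := by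
  have hsub : Icc τ u ⊆ Icc 0 T := Icc_subset_Icc hτ.1 hu.mem.2
  have hanti := h.antitoneOn_weight_mul_support h.a_pos.le h.d_nonneg
  have hdδ : ∀ t ∈ Icc τ u, δ ≤ d t := fun t ht =>
    hδd.trans (h.monotoneOn_d hu hτ ⟨hτ.1.trans ht.1, ht.2⟩ ht.1)
  rcases le_or_gt (s u) (X + 1) with hsu | hsu
  · have hwδ : w * δ ≤ profileWeight a (d u) (s u) * d u :=
      mul_le_mul (hw u hu.mem hsu) (hdδ u (right_mem_Icc.2 hτ.2)) hδ.le (profileWeight_pos _ _ _).le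
    have hle := hanti hu.mem h.T_mem hu.mem.2
    simp only [h.φ_apex hu, cos_pi_div_two, sin_pi_div_two] at hle
    linarith [min_le_left (w * δ) (w * (s 0 * δ * (4 * a / (X + 1) ^ 2)))]
  obtain ⟨v, hv, hsv⟩ := intermediate_value_Icc hτ.2 (h.continuousOn_s.mono hsub)
    ⟨hX.trans (lt_add_one X).le, hsu.le⟩
  have hvT : v ∈ Icc 0 T := hsub hv
  have hs0 := h.s_zero_pos
  have ha := h.a_pos
  set c := w * (s 0 * δ * (4 * a / (X + 1) ^ 2)) with hc
  have hdrop := le_of_hasDerivAt_nonpos hv.1 (fun t ht =>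
    have hp := h.isProfileAt t (hsub ⟨ht.1, ht.2.trans hv.2⟩)
    hp.hasDerivAt_weight_mul_support.fun_add (hp.hasDerivAt_s.const_mul c)) fun t ht => by
      have htu : t ∈ Icc τ u := ⟨ht.1.le, ht.2.le.trans hv.2⟩
      have ht' := hsub htu
      have hst : s t ≤ X + 1 := hsv ▸ h.monotoneOn_s ht' hvT ht.2.le
      have hgap := (h.isProfileAt t ht').gap_pos
      have hspos := (h.isProfileAt t ht').s_pos
      have hd0 := h.d_nonneg t ht'
      have hwt := profileWeight_pos a (d t) (s t)
      have hcle : c ≤ profileWeight a (d t) (s t) *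
          (s t * d t * (4 * a / (s t ^ 2 - d t ^ 2))) := by
        rw [hc]
        gcongr
        exacts [hw t ht' hst, h.s_zero_le ht', hdδ t htu, by nlinarith [sq_nonneg (d t)]]
      have hc0 : 0 ≤ c := by positivity
      linarith [mul_le_mul_of_nonneg_left (sin_le_one (φ t)) hc0]
  have hsupp' : profileWeight a (d τ) (s τ) * (s τ * cos (φ τ) - d τ * sin (φ τ)) ≤ 0 :=
    mul_nonpos_of_nonneg_of_nonpos (profileWeight_pos _ _ _).le hsupp
  have hcX : c * 1 ≤ c * (X + 1 - s τ) :=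
    mul_le_mul_of_nonneg_left (by linarith) (by positivity)
  have hend := hanti hvT h.T_mem hvT.2
  simp only [hsv] at hdrop hend
  linarith [min_le_right (w * δ) c]

end ClosedExcursion

lemma exists_forall_le_of_le_mul_profileWeight (ha : 0 ≤ a) {c : ℝ} (hc : 0 < c) :
    ∃ M, ∀ x > 0, c ≤ x * profileWeight a 0 x → x ≤ M := by
  refine ⟨4 * (2 * a + 1) + 4 * |log c| + 1, fun x hx hle => ?_⟩
  have hlog : log c ≤ (2 * a + 1) * log x - x ^ 2 / 4 := by
    refine (log_le_log hc hle).trans_eq ?_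
    rw [log_mul hx.ne' (profileWeight_pos _ _ _).ne', profileWeight, log_exp, zero_pow two_ne_zero,
      sub_zero, add_zero, log_pow]
    push_cast
    ring
  have hlogx : (2 * a + 1) * log x ≤ (2 * a + 1) * x :=
    mul_le_mul_of_nonneg_left (log_le_self hx.le) (by positivity)
  by_contra! hlt
  have habs := abs_nonneg (log c)
  nlinarith [neg_abs_le (log c), mul_nonneg habs (show 0 ≤ x - 1 by linarith)]

theorem exists_forall_s_T_le (ha : 1 ≤ a) {lo : ℝ} (hlo : 0 < lo) :
    ∃ M, ∀ {d s φ : ℝ → ℝ} {T : ℝ}, ClosedExcursion a d s φ T → lo ≤ s 0 → s T ≤ M := by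
  have ha0 : 0 < a := one_pos.trans_le ha
  obtain ⟨δ, hδ, hearly⟩ := exists_forall_exists_d_eq ha0 hlo
  set X := (2 * a + 2) * (a + 1 + δ) / δ with hX
  obtain ⟨w, hw0, hw⟩ := exists_forall_le_profileWeight ha hlo (X + 1)
  have hc : 0 < min (w * δ) (w * (lo * δ * (4 * a / (X + 1) ^ 2))) := by positivity
  obtain ⟨M, hM⟩ := exists_forall_le_of_le_mul_profileWeight ha0.le hc
  refine ⟨M, fun {d s φ T} h hlos => hM (s T) (h.isProfileAt T h.T_mem).s_pos ?_⟩
  obtain ⟨u, hu⟩ := h.exists_isApex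
  obtain ⟨r, hr, hdr, hsr⟩ := hearly h.toExcursion hlos hu (h.φ_apex hu)
  obtain ⟨τ, hτ, hτs, hsupp⟩ := h.exists_support_nonpos hu hr
  have hs0 : s 0 ≤ a + 1 := by nlinarith [h.s_zero_sq_lt, h.s_zero_pos]
  have hdu : d u ≤ 2 * a + 2 := by nlinarith [h.sq_d_apex_le hu]
  have hτX : s τ ≤ X := by
    rw [hX, le_div_iff₀ hδ, mul_comm (s τ), ← hdr]
    exact hτs.trans (mul_le_mul hdu (by linarith) (h.s_zero_pos.le.trans
      (h.s_zero_le ⟨hr.1, hr.2.trans hu.mem.2⟩)) (by positivity))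
  have hτ' : τ ∈ Icc 0 u := ⟨hr.1.trans hτ.1, hτ.2⟩
  have hsT := (h.isProfileAt T h.T_mem).s_pos
  have hend := h.weight_mul_support_le hu hτ' hsupp hδ
    (hdr ▸ h.monotoneOn_d hu hr hτ' hτ.1) hτX hw0 (hw h.toExcursion hlos)
  calc min (w * δ) (w * (lo * δ * (4 * a / (X + 1) ^ 2)))
      ≤ min (w * δ) (w * (s 0 * δ * (4 * a / (X + 1) ^ 2))) := by gcongr
    _ ≤ s T * profileWeight a 0 (s T) * -cos (φ T) := by
        rw [h.d_T] at hend
        linarith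
    _ ≤ s T * profileWeight a 0 (s T) * 1 :=
        mul_le_mul_of_nonneg_left (by linarith [neg_one_le_cos (φ T)])
          (mul_nonneg hsT.le (profileWeight_pos _ _ _).le)
    _ = s T * profileWeight a 0 (s T) := mul_one _

namespace Excursion

variable {z : ℝ}

lemma s_le_of_s_T_le (h : Excursion a d s φ T) (hz : s T ≤ z) (ht : t ∈ Icc 0 T) : s t ≤ z :=
  (h.monotoneOn_s ht h.T_mem ht.2).trans hz

lemma s_mul_exp_le (h : Excursion a d s φ T) (ha : 1 ≤ a) (hz : s T ≤ z) (ht : t ∈ Icc 0 T)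
    (hφ : ∀ r ∈ Ioo 0 t, φ r ≤ π / 4) : s t * exp (-(π + z ^ 2 / 2)) ≤ 2 * s 0 := by
  have hsub : Icc 0 t ⊆ Icc 0 T := Icc_subset_Icc_right ht.2
  have hanti := le_of_hasDerivAt_nonpos (f := fun t => s t - d t) ht.1
    (fun r hr => (h.isProfileAt r (hsub hr)).hasDerivAt_s.sub
      (h.isProfileAt r (hsub hr)).hasDerivAt_d) fun r hr => by
        have hr' := hsub (Ioo_subset_Icc_self hr)
        have hφ0 := h.φ_nonneg h.φ_pos r hr'
        have hsin := sin_le_sin_of_le_of_le_pi_div_two (by linarith [pi_pos])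
          (by linarith [pi_pos]) (hφ r hr)
        have hcos := cos_le_cos_of_nonneg_of_le_pi hφ0 (by linarith [pi_pos]) (hφ r hr)
        rw [sin_pi_div_four] at hsin
        rw [cos_pi_div_four] at hcos
        linarith
  simp only [h.d_zero, sub_zero] at hanti
  have hs := (h.isProfileAt t ht).s_pos
  have hds := (h.isProfileAt t ht).d_lt_s
  refine le_of_mul_le_mul_left ?_ hs
  calc s t * (s t * exp (-(π + z ^ 2 / 2))) = s t ^ 2 * exp (-(π + z ^ 2 / 2)) := by ring
    _ ≤ s t ^ 2 * exp (-(π + s t ^ 2 / 2)) := by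
        gcongr
        exact h.s_le_of_s_T_le hz ht
    _ ≤ s t ^ 2 - d t ^ 2 := h.sq_mul_exp_le_gap ha ht
    _ = (s t + d t) * (s t - d t) := by ring
    _ ≤ (2 * s t) * s 0 := mul_le_mul (by linarith) hanti (by linarith) (by linarith)
    _ = s t * (2 * s 0) := by ring

/- `w cos φ` decreases from its value `w ≈ s(0)^(2a)` at `t = 0`, and `w ≈ s^(2a)`. -/
lemma cos_mul_sq_le (h : Excursion a d s φ T) (ha : 1 ≤ a) (hz : s T ≤ z) (ht : t ∈ Icc 0 T) :
    cos (φ t) * s t ^ 2 ≤ exp (a * (π + z ^ 2 / 2) + z ^ 2 / 2) * s 0 ^ 2 := by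
  have hs := (h.isProfileAt t ht).s_pos
  have hs0 := h.s_zero_pos
  have hgap := (h.isProfileAt t ht).gap_pos
  have hsub : Icc 0 t ⊆ Icc 0 T := Icc_subset_Icc_right ht.2
  have hanti := le_of_hasDerivAt_nonpos ht.1
    (fun r hr => (h.isProfileAt r (hsub hr)).hasDerivAt_weight_mul_cos) fun r hr => by
      have hr' := hsub (Ioo_subset_Icc_self hr)
      have := (h.isProfileAt r hr').gap_pos
      have := h.d_nonneg r hr'
      have := profileWeight_pos a (d r) (s r)
      have := h.a_pos
      rw [neg_nonpos]
      positivity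
  simp only [h.φ_zero, cos_zero, mul_one, h.d_zero] at hanti
  refine le_of_mul_le_mul_left ?_ (profileWeight_pos a (d t) (s t))
  calc profileWeight a (d t) (s t) * (cos (φ t) * s t ^ 2)
      ≤ profileWeight a 0 (s 0) * s t ^ 2 := by
        rw [← mul_assoc]
        exact mul_le_mul_of_nonneg_right hanti (sq_nonneg _)
    _ ≤ profileWeight a (d t) (s t) * (exp (a * (π + z ^ 2 / 2) + z ^ 2 / 2) * s 0 ^ 2) := by
        rw [← exp_log (pow_pos hs 2), ← exp_log (pow_pos hs0 2), profileWeight, profileWeight,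
          ← exp_add, ← exp_add, ← exp_add, exp_le_exp]
        have hloggap := log_le_log (by positivity) (h.sq_mul_exp_le_gap ha ht)
        rw [log_mul (pow_pos hs 2).ne' (exp_pos _).ne', log_exp] at hloggap
        have hlog := log_le_log (pow_pos hs0 2) (pow_le_pow_left₀ hs0.le (h.s_zero_le ht) 2)
        have hsz := pow_le_pow_left₀ hs.le (h.s_le_of_s_T_le hz ht) 2
        rw [show s 0 ^ 2 - 0 ^ 2 = s 0 ^ 2 by ring]
        nlinarith [mul_le_mul_of_nonneg_left hloggap h.a_pos.le,
          mul_nonneg (sub_nonneg.2 ha) (sub_nonneg.2 hlog),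
          mul_le_mul_of_nonneg_left hsz h.a_pos.le, sq_nonneg (s 0)]

lemma d_le_add_of_half_le_sin (h : Excursion a d s φ T) (ha : 1 ≤ a) (hz : s T ≤ z) {p v : ℝ}
    (hp : 0 ≤ p) (hpv : p ≤ v) (hv : v ≤ T) (hφ : ∀ t ∈ Ioo p v, 1 / 2 ≤ sin (φ t)) :
    d v ≤ d p + 2 * exp (a * (π + z ^ 2 / 2) + z ^ 2 / 2) * s 0 := by
  set K := exp (a * (π + z ^ 2 / 2) + z ^ 2 / 2)
  have hsub : Icc p v ⊆ Icc 0 T := Icc_subset_Icc hp hv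
  have hs : ∀ t ∈ Icc p v, 0 < s t := fun t ht => (h.isProfileAt t (hsub ht)).s_pos
  have hanti := le_of_hasDerivAt_nonpos hpv (fun t ht =>
    (h.isProfileAt t (hsub ht)).hasDerivAt_d.fun_add
      (((h.isProfileAt t (hsub ht)).hasDerivAt_s.fun_inv (hs t ht).ne').const_mul
        (2 * K * s 0 ^ 2))) fun t ht => by
          have ht' := Ioo_subset_Icc_self ht
          have hcos := h.cos_mul_sq_le ha hz (hsub ht')
          have hsin := mul_le_mul_of_nonneg_left (hφ t ht)
            (show 0 ≤ 2 * K * s 0 ^ 2 by positivity)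
          have hst := hs t ht'
          calc cos (φ t) + 2 * K * s 0 ^ 2 * (-sin (φ t) / s t ^ 2)
              = (cos (φ t) * s t ^ 2 - 2 * K * s 0 ^ 2 * sin (φ t)) / s t ^ 2 := by
                field_simp
                ring
            _ ≤ 0 := div_nonpos_of_nonpos_of_nonneg (by linarith) (sq_nonneg _)
  have hsp := hs p (left_mem_Icc.2 hpv)
  have hsv : 0 ≤ 2 * K * s 0 ^ 2 * (s v)⁻¹ :=
    mul_nonneg (by positivity) (inv_pos.2 (hs v (right_mem_Icc.2 hpv))).le
  have hsp' : 2 * K * s 0 ^ 2 * (s p)⁻¹ ≤ 2 * K * s 0 := by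
    rw [← div_eq_mul_inv, div_le_iff₀ hsp, pow_two, ← mul_assoc]
    exact mul_le_mul_of_nonneg_left (h.s_zero_le (hsub (left_mem_Icc.2 hpv)))
      (mul_nonneg (by positivity) h.s_zero_pos.le)
  linarith

end Excursion

lemma exists_forall_d_le_mul (ha : 1 ≤ a) (z : ℝ) :
    ∃ C > 0, ∀ {d s φ : ℝ → ℝ} {T : ℝ}, Excursion a d s φ T → s T ≤ z →
      ∀ t ∈ Icc 0 T, d t ≤ C * s 0 := by
  set c := exp (-(π + z ^ 2 / 2))
  set K := exp (a * (π + z ^ 2 / 2) + z ^ 2 / 2)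
  have hc : 0 < c := exp_pos _
  refine ⟨2 / c + 2 * K, by positivity, fun {d s φ T} h hz t ht => ?_⟩
  obtain ⟨u, hu⟩ := h.exists_isApex
  have hs0 := h.s_zero_pos
  refine (h.d_le_apex hu ht).trans ?_
  have hsub : Icc 0 u ⊆ Icc 0 T := Icc_subset_Icc_right hu.mem.2
  have hearly : ∀ p ∈ Icc 0 u, (∀ r ∈ Ioo 0 p, φ r ≤ π / 4) → d p ≤ 2 / c * s 0 := fun p hp hφ => by
    have := h.s_mul_exp_le ha hz (hsub hp) hφ
    rw [div_mul_eq_mul_div, le_div_iff₀ hc]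
    exact (mul_le_mul_of_nonneg_right (h.isProfileAt p (hsub hp)).d_lt_s.le hc.le).trans this
  by_cases hcase : ∃ r ∈ Icc 0 u, π / 4 - φ r ≤ 0
  · obtain ⟨p, hp, hφp, hpos⟩ := exists_first_zero (f := fun t => π / 4 - φ t)
      (continuousOn_const.sub (h.continuousOn_φ.mono hsub)) (by linarith [h.φ_zero, pi_pos]) hcase
    have hp' := Ioc_subset_Icc_self hp
    have hφ : ∀ t ∈ Ioo p u, φ p ≤ φ t := fun t ht =>
      le_of_hasDerivAt_nonneg ht.1.le
        (fun r hr => (h.isProfileAt r (hsub ⟨hp'.1.trans hr.1, hr.2.trans ht.2.le⟩)).hasDerivAt_φ)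
        fun r hr => ((h.restrict hu.mem.1 hu.mem.2).curvature_pos hu.lt_before r
          ⟨hp'.1.trans hr.1.le, hr.2.trans ht.2⟩).le
    have := h.d_le_add_of_half_le_sin ha hz hp'.1 hp.2 hu.mem.2 fun t ht => by
      rw [← sin_pi_div_six]
      exact sin_le_sin_of_le_of_le_pi_div_two (by linarith [pi_pos])
        (hu.lt_before t ⟨hp'.1.trans ht.1.le, ht.2⟩).le (by linarith [hφ t ht, pi_pos])
    linarith [hearly p hp' fun r hr => by linarith [hpos r (Ioo_subset_Ico_self hr)]]
  · push Not at hcase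
    have := hearly u (right_mem_Icc.2 hu.mem.1) fun r hr =>
      (sub_pos.1 (hcase r (Ioo_subset_Icc_self hr))).le
    have : 0 < K * s 0 := by positivity
    linarith

lemma exists_forall_sq_profileWeight_mul_le (ha : 1 ≤ a) (z : ℝ) :
    ∃ M > 0, ∀ D S : ℝ, 0 < S ^ 2 - D ^ 2 → 0 < S → S ≤ z →
      profileWeight a D S ^ 2 * (1 / 2 + 2 * a / (S ^ 2 - D ^ 2)) ≤ M := by
  refine ⟨(1 / 2 + 2 * a) * exp (2 * a * z ^ 2), by positivity, fun D S hgap hS hz => ?_⟩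
  have hlog : log (S ^ 2 - D ^ 2) ≤ z ^ 2 := by
    linarith [log_le_self hgap.le, sq_nonneg D, pow_le_pow_left₀ hS.le hz 2]
  have hsq : profileWeight a D S ^ 2
      = exp (2 * a * log (S ^ 2 - D ^ 2) - (S ^ 2 + D ^ 2) / 2) := by
    rw [profileWeight, ← exp_nat_mul]
    push_cast
    ring_nf
  have hle : profileWeight a D S ^ 2 ≤ exp (2 * a * z ^ 2) := by
    rw [hsq, exp_le_exp]
    nlinarith [mul_le_mul_of_nonneg_left hlog (show 0 ≤ 2 * a by linarith), sq_nonneg D,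
      sq_nonneg S]
  have hdiv : profileWeight a D S ^ 2 / (S ^ 2 - D ^ 2) ≤ exp (2 * a * z ^ 2) := by
    rw [hsq, div_eq_mul_inv, ← exp_log (inv_pos.2 hgap), log_inv, ← exp_add, exp_le_exp]
    nlinarith [mul_le_mul_of_nonneg_left hlog (show 0 ≤ 2 * a - 1 by linarith), sq_nonneg D,
      sq_nonneg S, sq_nonneg z]
  calc profileWeight a D S ^ 2 * (1 / 2 + 2 * a / (S ^ 2 - D ^ 2))
      = 1 / 2 * profileWeight a D S ^ 2
        + 2 * a * (profileWeight a D S ^ 2 / (S ^ 2 - D ^ 2)) := by ring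
    _ ≤ 1 / 2 * exp (2 * a * z ^ 2) + 2 * a * exp (2 * a * z ^ 2) := by gcongr
    _ = (1 / 2 + 2 * a) * exp (2 * a * z ^ 2) := by ring

namespace Excursion

variable {u z M : ℝ}

lemma T_pos_of_φ_eq_pi (h : Excursion a d s φ T) (hφ : φ T = π) : 0 < T :=
  h.T_nonneg.lt_of_ne fun hT => pi_pos.ne (by rw [← hφ, ← hT, h.φ_zero])

lemma four_mul_le_gap_of_φ_eq_pi (h : Excursion a d s φ T) (hφ : φ T = π) :
    4 * a ≤ s T ^ 2 - d T ^ 2 := by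
  have hgap := (h.isProfileAt T h.T_mem).gap_pos
  have hs := (h.isProfileAt T h.T_mem).s_pos
  have hK := deriv_nonpos_of_forall_Ioo_le (f := fun t => -φ t) (h.T_pos_of_φ_eq_pi hφ)
    (fun t ht => neg_le_neg ((h.φ_le_pi t (Ioo_subset_Icc_self ht)).trans_eq hφ.symm))
    (h.isProfileAt T h.T_mem).hasDerivAt_φ.fun_neg
  rw [profileCurvature, hφ, sin_pi, cos_pi] at hK
  have hV : 2 * a / (s T ^ 2 - d T ^ 2) ≤ 1 / 2 := by
    by_contra! hlt
    nlinarith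
  rw [div_le_iff₀ hgap] at hV
  linarith

lemma exp_le_profileWeight_of_φ_eq_pi (h : Excursion a d s φ T) (hφ : φ T = π) (hz : s T ≤ z) :
    exp (a * log (4 * a) - z ^ 2 / 2) ≤ profileWeight a (d T) (s T) := by
  have ha := h.a_pos
  have hlog := mul_le_mul_of_nonneg_left
    (log_le_log (by positivity) (h.four_mul_le_gap_of_φ_eq_pi hφ)) ha.le
  have hsz := pow_le_pow_left₀ (h.isProfileAt T h.T_mem).s_pos.le hz 2
  exact exp_le_exp.2 (by linarith [(h.isProfileAt T h.T_mem).gap_pos])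

lemma sq_weight_mul_cos_le (h : Excursion a d s φ T) (hu : IsApex φ T u) (hφ : φ u = π / 2)
    (hM : ∀ t ∈ Icc 0 T,
      profileWeight a (d t) (s t) ^ 2 * (1 / 2 + 2 * a / (s t ^ 2 - d t ^ 2)) ≤ M) :
    (profileWeight a (d T) (s T) * cos (φ T)) ^ 2 + M * d T ^ 2 ≤ M * d u ^ 2 := by
  have hsub : Icc u T ⊆ Icc 0 T := Icc_subset_Icc_left hu.mem.1
  have hanti := le_of_hasDerivAt_nonpos
    (f' := fun t => 2 * (d t * cos (φ t)) * (M - profileWeight a (d t) (s t) ^ 2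
      * (1 / 2 + 2 * a / (s t ^ 2 - d t ^ 2)))) hu.mem.2 (fun t ht => by
      refine (((h.isProfileAt t (hsub ht)).hasDerivAt_weight_mul_cos.fun_pow 2).fun_add
        (((h.isProfileAt t (hsub ht)).hasDerivAt_d.fun_pow 2).const_mul M)).congr_deriv ?_
      push_cast
      ring) fun t ht => by
      have ht' := hsub (Ioo_subset_Icc_self ht)
      exact mul_nonpos_of_nonpos_of_nonneg (mul_nonpos_of_nonneg_of_nonpos two_pos.le
        (mul_nonpos_of_nonneg_of_nonpos (h.d_nonneg t ht')
          (h.cos_nonpos_of_apex_lt hu (Ioo_subset_Ioc_self ht)))) (sub_nonneg.2 (hM t ht'))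
  simpa [hφ] using hanti

end Excursion

/- Turning back to `φ = π` requires a definite weight there, which a curve staying close to the
diagonal cannot reach. -/
theorem exists_forall_φ_T_lt_pi (ha : 1 ≤ a) (z : ℝ) :
    ∃ K > 0, ∀ {d s φ : ℝ → ℝ} {T : ℝ}, Excursion a d s φ T → s T ≤ z →
      (∀ t ∈ Icc 0 T, d t ≤ K) → φ T < π := by
  obtain ⟨M, hM, hbound⟩ := exists_forall_sq_profileWeight_mul_le ha z
  set w := exp (a * log (4 * a) - z ^ 2 / 2)
  have hw : 0 < w := exp_pos _
  refine ⟨w / (M + 1), by positivity, fun {d s φ T} h hz hd => ?_⟩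
  by_contra! hφ
  replace hφ : φ T = π := (h.φ_le_pi T h.T_mem).antisymm hφ
  obtain ⟨u, hu⟩ := h.exists_isApex
  have huT : u < T := hu.mem.2.lt_of_ne fun huT => by
    have := hu.le_apex
    rw [huT, hφ] at this
    linarith [pi_pos]
  have hle := h.sq_weight_mul_cos_le hu (hu.eq_of_lt huT) fun t ht =>
    hbound _ _ (h.isProfileAt t ht).gap_pos (h.isProfileAt t ht).s_pos (h.s_le_of_s_T_le hz ht)
  have hwT := pow_le_pow_left₀ hw.le (h.exp_le_profileWeight_of_φ_eq_pi hφ hz) 2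
  have hdu : M * d u ^ 2 < w ^ 2 :=
    calc M * d u ^ 2 ≤ M * (w / (M + 1)) ^ 2 := by
          have := h.d_nonneg u hu.mem
          gcongr
          exact hd u hu.mem
      _ < w ^ 2 := by
          rw [div_pow, mul_div_assoc', div_lt_iff₀ (by positivity)]
          nlinarith [mul_pos (pow_pos hw 2) (show 0 < (M + 1) ^ 2 - M by nlinarith)]
  rw [hφ, cos_pi] at hle
  nlinarith [mul_nonneg hM.le (sq_nonneg (d T))]

section SturmComparison

variable {b : ℝ}

lemma one_le_sturm_polynomial {x : ℝ} (hb : 2 ≤ b) (hx : x ^ 2 ≤ 3) :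
    1 ≤ 2 * b ^ 2 - 2 * b * x - x ^ 2 + 2 * b ^ 2 * x ^ 2 + 4 * b * x ^ 3 + x ^ 4 := by
  have hxu : x ≤ 1.733 := by nlinarith
  have hxl : -1.733 ≤ x := by nlinarith
  rcases le_total 0 x with h | h
  · nlinarith [mul_nonneg (sub_nonneg.2 hb) (show 0 ≤ b - x by linarith),
      mul_nonneg (sq_nonneg x) (show 0 ≤ b ^ 2 - 4 by nlinarith),
      show 0 ≤ 4 * b * x ^ 3 by positivity, show 0 ≤ x ^ 4 by positivity, sq_nonneg x]
  · have hincr : 0 ≤ (b - 2) * (2 * (b + 2) - 2 * x + 2 * x ^ 2 * (b + 2 + 2 * x)) := by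
      have : 0 ≤ b + 2 + 2 * x := by linarith
      have : 0 ≤ 2 * (b + 2) - 2 * x := by linarith
      exact mul_nonneg (by linarith) (by positivity)
    have htwo : 1 ≤ 8 - 4 * x + 7 * x ^ 2 + 8 * x ^ 3 + x ^ 4 := by
      nlinarith [mul_nonneg (show 0 ≤ 1.733 + x by linarith) (sq_nonneg x), sq_nonneg (x ^ 2 - 3),
        sq_nonneg (x ^ 2 + 4 * x + 2), sq_nonneg (x + 1.733), sq_nonneg (x ^ 2 + 1.7 * x),
        mul_nonneg (show 0 ≤ 1.733 + x by linarith) (neg_nonneg.2 h)]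
    linarith

lemma sturm_potential_pos {D S σ : ℝ} (hb : b ^ 2 = 4 * a) (hb2 : 2 ≤ b) (hS : 0 < S)
    (hSb : (S - b) ^ 2 ≤ 3) (hσ : σ ^ 2 ≤ 1) (hD : 4 * a * (9 + 4 * b) * D ^ 2 < S ^ 2 - D ^ 2) :
    0 < -2 * σ ^ 2 - 2 * (S - b) * (S * (2 * a / (S ^ 2 - D ^ 2) - 1 / 2))
      + (3 - (S - b) ^ 2) * (1 / 2 + 2 * a / (S ^ 2 - D ^ 2)) := by
  have ha : 0 < a := by nlinarith
  have hgap : 0 < S ^ 2 - D ^ 2 := lt_of_le_of_lt (by positivity) hD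
  set V := 2 * a / (S ^ 2 - D ^ 2) with hVdef
  have hV : V * (S ^ 2 - D ^ 2) = 2 * a := div_mul_cancel₀ _ hgap.ne'
  have hVpos : 0 < V := by positivity
  obtain ⟨x, rfl⟩ : ∃ x, S = b + x := ⟨S - b, by ring⟩
  rw [add_sub_cancel_left] at hSb ⊢
  have hxl : -2 ≤ x := by nlinarith
  have hxu : x ≤ 2 := by nlinarith
  have herror : 2 * V * D ^ 2 * (9 + 4 * b) < 1 := by
    rw [hVdef, mul_div_assoc', div_mul_eq_mul_div, div_mul_eq_mul_div, div_lt_one hgap]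
    linarith
  have hbound : -(9 + 4 * b) ≤ 3 - 3 * x ^ 2 - 2 * b * x := by nlinarith
  have hidentity : 2 * (b + x) ^ 2 *
      (-2 * σ ^ 2 - 2 * x * ((b + x) * (V - 1 / 2)) + (3 - x ^ 2) * (1 / 2 + V))
      = (2 * b ^ 2 - 2 * b * x - x ^ 2 + 2 * b ^ 2 * x ^ 2 + 4 * b * x ^ 3 + x ^ 4)
        + 4 * (b + x) ^ 2 * (1 - σ ^ 2) + 2 * V * D ^ 2 * (3 - 3 * x ^ 2 - 2 * b * x) := by
    linear_combination (6 - 6 * x ^ 2 - 4 * b * x) * (hV - hb / 2)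
  refine (mul_pos_iff_of_pos_left (show 0 < 2 * (b + x) ^ 2 by positivity)).1 ?_
  rw [hidentity]
  nlinarith [one_le_sturm_polynomial hb2 hSb, mul_nonneg (sq_nonneg (b + x)) (sub_nonneg.2 hσ),
    mul_le_mul_of_nonneg_left hbound (show 0 ≤ 2 * V * D ^ 2 by positivity)]

/- The Wronskian of `d` and `3 - (s - b)²`. -/
lemma IsProfileAt.hasDerivAt_sturm_wronskian (h : IsProfileAt a d s φ t) (b : ℝ) :
    HasDerivAt (fun t => d t * (-2 * (s t - b)) * (profileWeight a (d t) (s t) * sin (φ t))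
        - (3 - (s t - b) ^ 2) * (profileWeight a (d t) (s t) * cos (φ t)))
      (profileWeight a (d t) (s t) * d t *
        (-2 * sin (φ t) ^ 2 - 2 * (s t - b) * (s t * (2 * a / (s t ^ 2 - d t ^ 2) - 1 / 2))
          + (3 - (s t - b) ^ 2) * (1 / 2 + 2 * a / (s t ^ 2 - d t ^ 2)))) t := by
  refine (((h.hasDerivAt_d.fun_mul ((h.hasDerivAt_s.sub_const b).const_mul (-2))).fun_mul
    h.hasDerivAt_weight_mul_sin).fun_sub ((((h.hasDerivAt_s.sub_const b).fun_pow 2).const_sub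
      3).fun_mul h.hasDerivAt_weight_mul_cos)).congr_deriv ?_
  push_cast
  ring

theorem Excursion.s_T_ne (h : Excursion a d s φ T) (hb : b ^ 2 = 4 * a) (hb2 : 2 ≤ b)
    (hs0 : s 0 ≤ b - √3) (hd : ∀ t ∈ Icc 0 T, b - √3 ≤ s t →
      4 * a * (9 + 4 * b) * d t ^ 2 < s t ^ 2 - d t ^ 2) : s T ≠ b + √3 := by
  intro hsT
  have h3 : √3 ^ 2 = 3 := sq_sqrt (by norm_num)
  have h3pos : 0 < √3 := sqrt_pos.2 (by norm_num)
  obtain ⟨p, hp, hsp⟩ := intermediate_value_Icc h.T_nonneg h.continuousOn_s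
    ⟨hs0, show b - √3 ≤ s T by linarith⟩
  have hpT : p < T := hp.2.lt_of_ne fun hpT => by linarith [hpT ▸ hsp]
  have hsub : Icc p T ⊆ Icc 0 T := Icc_subset_Icc_left hp.1
  have hmono := lt_of_hasDerivAt_pos hpT
    (fun t ht => (h.isProfileAt t (hsub ht)).hasDerivAt_sturm_wronskian b) fun t ht => by
      have ht' := hsub (Ioo_subset_Icc_self ht)
      have hst : b - √3 ≤ s t := hsp ▸ h.monotoneOn_s hp ht' ht.1.le
      have hstT : s t ≤ b + √3 := h.s_le_of_s_T_le hsT.le ht'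
      exact mul_pos (mul_pos (profileWeight_pos _ _ _) (h.d_pos t ⟨hp.1.trans_lt ht.1, ht.2⟩))
        (sturm_potential_pos hb hb2 (h.isProfileAt t ht').s_pos (by nlinarith) (sin_sq_le_one _)
          (hd t ht' hst))
  have hend : ∀ t ∈ Icc 0 T, 0 ≤ d t * (profileWeight a (d t) (s t) * sin (φ t)) * (2 * √3) :=
    fun t ht => mul_nonneg (mul_nonneg (h.d_nonneg t ht)
      (mul_nonneg (profileWeight_pos _ _ _).le (h.sin_nonneg ht))) (by positivity)
  have hendp := hend p hp
  have hendT := hend T h.T_mem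
  simp only [hsp, hsT] at hmono hendp hendT
  rw [add_sub_cancel_left, sub_sub_cancel_left, neg_sq, h3, sub_self, zero_mul, zero_mul] at hmono
  linarith

end SturmComparison

/- Curves starting near the origin stay so close to the diagonal that they cross it transversally,
by comparison with the linearized equation. -/
theorem exists_eventually_φ_T_lt_pi_and_s_T_lt (ha : 1 ≤ a) :
    ∃ z > 0, ∀ᶠ r in 𝓝[>] (0 : ℝ), ∀ {d s φ : ℝ → ℝ} {T : ℝ}, Excursion a d s φ T → s 0 = r →
      s T ≤ z → φ T < π ∧ s T < z := by
  set b := 2 * √a with hbdef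
  have hb : b ^ 2 = 4 * a := by
    rw [hbdef, mul_pow, sq_sqrt (by linarith)]
    norm_num
  have hb2 : 2 ≤ b := by linarith [one_le_sqrt.2 ha]
  have hz₁ : 0 < b - √3 := by
    linarith [(sqrt_lt' (show (0 : ℝ) < 2 by norm_num)).2 (show (3 : ℝ) < 2 ^ 2 by norm_num)]
  set z := b + √3
  obtain ⟨C, -, hsmall⟩ := exists_forall_d_le_mul ha z
  obtain ⟨K, hK, hlt⟩ := exists_forall_φ_T_lt_pi ha z
  have hnear : ∀ᶠ r in 𝓝[>] (0 : ℝ), C * r < K ∧ r < b - √3 ∧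
      4 * a * (9 + 4 * b) * (C * r) ^ 2 < (b - √3) ^ 2 * exp (-(π + z ^ 2 / 2)) := by
    have hev : ∀ {f : ℝ → ℝ} {x : ℝ}, Continuous f → f 0 < x → ∀ᶠ r in 𝓝[>] (0 : ℝ), f r < x :=
      fun hf hx => nhdsWithin_le_nhds (hf.continuousAt.eventually_lt continuousAt_const hx)
    exact (hev (by fun_prop) (by simpa)).and ((hev continuous_id hz₁).and
      (hev (by fun_prop) (by simpa using by positivity)))
  refine ⟨z, by positivity, hnear.mono fun r ⟨hr, hrb, hrd⟩ d s φ T h hs hz => ?_⟩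
  have hd : ∀ t ∈ Icc 0 T, d t ≤ C * r := fun t ht => hs ▸ hsmall h hz t ht
  refine ⟨hlt h hz fun t ht => (hd t ht).trans hr.le, hz.lt_of_ne ?_⟩
  refine h.s_T_ne hb hb2 (hs.trans_le hrb.le) fun t ht hst => ?_
  calc 4 * a * (9 + 4 * b) * d t ^ 2 ≤ 4 * a * (9 + 4 * b) * (C * r) ^ 2 := by
        have := h.d_nonneg t ht
        gcongr
        exact hd t ht
    _ < (b - √3) ^ 2 * exp (-(π + z ^ 2 / 2)) := hrd
    _ ≤ s t ^ 2 * exp (-(π + s t ^ 2 / 2)) := by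
        have := (h.isProfileAt t ht).s_pos
        have := h.s_le_of_s_T_le hz ht
        gcongr
    _ ≤ s t ^ 2 - d t ^ 2 := h.sq_mul_exp_le_gap ha ht

lemma gap_eq_of_profileCurvature_pi_eq_zero {D S : ℝ} (hS : 0 < S) (hgap : 0 < S ^ 2 - D ^ 2)
    (hk : profileCurvature a D S π = 0) : S ^ 2 - D ^ 2 = 4 * a := by
  rw [profileCurvature, sin_pi, cos_pi] at hk
  have hzero : 2 * a / (S ^ 2 - D ^ 2) - 1 / 2 = 0 :=
    (mul_eq_zero.1 (show S * (2 * a / (S ^ 2 - D ^ 2) - 1 / 2) = 0 by linarith)).resolve_left hS.ne'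
  rw [sub_eq_zero, div_eq_iff hgap.ne'] at hzero
  linarith

namespace Excursion

variable {u : ℝ}

lemma monotoneOn_gap (h : Excursion a d s φ T) (hu : IsApex φ T u) :
    MonotoneOn (fun t => s t ^ 2 - d t ^ 2) (Icc u T) := fun _ h₁ _ h₂ h₁₂ =>
  le_of_hasDerivAt_nonneg h₁₂ (fun r hr =>
    (h.isProfileAt r ⟨hu.mem.1.trans (h₁.1.trans hr.1), hr.2.trans h₂.2⟩).hasDerivAt_gap)
    fun r hr => by
      have hr' : r ∈ Icc 0 T := ⟨hu.mem.1.trans (h₁.1.trans hr.1.le), hr.2.le.trans h₂.2⟩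
      linarith [mul_nonneg (h.isProfileAt r hr').s_pos.le (h.sin_nonneg hr'),
        mul_nonpos_of_nonneg_of_nonpos (h.d_nonneg r hr')
          (h.cos_nonpos_of_apex_lt hu ⟨h₁.1.trans_lt hr.1, hr'.2⟩)]

/- At such a time `φ` would have a local maximum, so that `s² - d² = 4a` there. Then `s² - d² ≤ 4a`
ever since the apex, and `w sin φ` cannot have decreased to `0`. -/
theorem φ_lt_pi (h : Excursion a d s φ T) (ht : t ∈ Ico 0 T) : φ t < π := by
  by_contra! hπ
  have htT := Ico_subset_Icc_self ht
  have hφt : φ t = π := (h.φ_le_pi t htT).antisymm hπ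
  have ht0 : 0 < t := ht.1.lt_of_ne fun h0 => pi_pos.ne' (by rw [← hφt, ← h0, h.φ_zero])
  have hmax : IsLocalMax φ t := by
    filter_upwards [Ioo_mem_nhds ht0 ht.2] with r hr
    exact hφt ▸ h.φ_le_pi r (Ioo_subset_Icc_self hr)
  have ht' := h.isProfileAt t htT
  have hgap : s t ^ 2 - d t ^ 2 = 4 * a := gap_eq_of_profileCurvature_pi_eq_zero ht'.s_pos
    ht'.gap_pos (hφt ▸ hmax.hasDerivAt_eq_zero ht'.hasDerivAt_φ)
  obtain ⟨u, hu⟩ := h.exists_isApex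
  have hut : u ≤ t := by
    by_contra! htu
    linarith [hu.lt_before t ⟨ht.1, htu⟩, pi_pos]
  have hincr := le_of_hasDerivAt_nonneg hut (fun r hr => (h.isProfileAt r
    ⟨hu.mem.1.trans hr.1, hr.2.trans ht.2.le⟩).hasDerivAt_weight_mul_sin) fun r hr => by
      have hr' := h.isProfileAt r ⟨hu.mem.1.trans hr.1.le, hr.2.le.trans ht.2.le⟩
      have hle : s r ^ 2 - d r ^ 2 ≤ 4 * a := hgap ▸
        h.monotoneOn_gap hu ⟨hr.1.le, hr.2.le.trans ht.2.le⟩ ⟨hut, ht.2.le⟩ hr.2.le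
      have : 1 / 2 ≤ 2 * a / (s r ^ 2 - d r ^ 2) := by
        rw [le_div_iff₀ hr'.gap_pos]
        linarith
      exact mul_nonneg (profileWeight_pos _ _ _).le (mul_nonneg hr'.s_pos.le (sub_nonneg.2 this))
  rw [hu.eq_of_lt (hut.trans_lt ht.2), hφt, sin_pi, sin_pi_div_two] at hincr
  linarith [profileWeight_pos a (d u) (s u)]

end Excursion

section FirstReturn

variable {f : ℝ → ℝ} {c x : ℝ}

lemma eventually_nhdsGT_pos_of_hasDerivAt (hf : HasDerivAt f c x) (hx : f x = 0) (hc : 0 < c) :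
    ∀ᶠ t in 𝓝[>] x, 0 < f t := by
  filter_upwards [((hasDerivAt_iff_tendsto_slope.1 hf).eventually (lt_mem_nhds hc)).filter_mono
    (nhdsWithin_mono _ fun t ht => ne_of_gt ht), self_mem_nhdsWithin] with t hslope ht
  rw [slope_def_field, hx, sub_zero] at hslope
  exact (div_pos_iff_of_pos_right (sub_pos.2 ht)).1 hslope

lemma ProfileArc.exists_closedExcursion (h : ProfileArc a d s φ T) (ha : 0 < a)
    (hs : s 0 ^ 2 < 4 * a) (hφ : ∀ t ∈ Icc 0 T, φ t ≤ π) (hT : ∃ t ∈ Ioc 0 T, d t ≤ 0) :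
    ∃ τ ∈ Ioc 0 T, ClosedExcursion a d s φ τ := by
  obtain ⟨r, hr, hdr⟩ := hT
  have hcos : 0 < cos (φ 0) := by simp [h.φ_zero]
  obtain ⟨δ, hδ, hpos⟩ := mem_nhdsGT_iff_exists_Ioc_subset.1 (eventually_nhdsGT_pos_of_hasDerivAt
    (h.isProfileAt 0 h.zero_mem).hasDerivAt_d h.d_zero hcos)
  have hδr : δ < r := by
    by_contra! hrδ
    exact (hpos ⟨hr.1, hrδ⟩).not_ge hdr
  obtain ⟨τ, hτ, hdτ, hd⟩ := exists_first_zero (h.continuousOn_d.mono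
    (Icc_subset_Icc hδ.le hr.2)) (hpos (right_mem_Ioc.2 hδ)) ⟨r, right_mem_Icc.2 hδr.le, hdr⟩
  have hτ0 : 0 < τ := hδ.trans hτ.1
  have hτT : τ ≤ T := hτ.2.trans hr.2
  refine ⟨τ, ⟨hτ0, hτT⟩, ⟨⟨h.restrict hτ0.le hτT, ha, hs, fun t ht => ?_, fun t ht =>
    hφ t ⟨ht.1, ht.2.trans hτT⟩⟩, hτ0, hdτ⟩⟩
  rcases le_total t δ with htδ | hδt
  · exact hpos ⟨ht.1, htδ⟩
  · exact hd t ⟨hδt, ht.2⟩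

end FirstReturn

section Flow

open scoped NNReal Manifold

variable {E : Type*} [NormedAddCommGroup E] [NormedSpace ℝ E]

lemma exists_flow_of_lipschitzWith [CompleteSpace E] {g : E → E} {B C : ℝ≥0}
    (hg : LipschitzWith C g) (hB : ∀ x, ‖g x‖ ≤ B) (R τ : ℝ≥0) :
    ∃ α : E × ℝ → E, ContinuousOn α (Metric.closedBall 0 R ×ˢ Icc (-τ : ℝ) τ) ∧
      ∀ x ∈ Metric.closedBall (0 : E) R, α (x, 0) = x ∧
        ∀ t ∈ Ioo (-τ : ℝ) τ, HasDerivAt (fun t => α (x, t)) (g (α (x, t))) t := by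
  have hPL : IsPicardLindelof (fun _ => g)
      (⟨0, neg_nonpos.2 τ.2, τ.2⟩ : Icc (-τ : ℝ) τ) 0 (R + B * τ) R B C :=
    { lipschitzOnWith := fun _ _ => hg.lipschitzOnWith
      continuousOn := fun _ _ => continuousOn_const
      norm_le := fun _ _ x _ => hB x
      mul_max_le := by simp }
  obtain ⟨α, hα, hcont⟩ := hPL.exists_forall_mem_closedBall_eq_hasDerivWithinAt_continuousOn
  exact ⟨α, hcont, fun x hx => ⟨(hα x hx).1, fun t ht =>
    ((hα x hx).2 t (Ioo_subset_Icc_self ht)).hasDerivAt (Icc_mem_nhds ht.1 ht.2)⟩⟩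

variable [FiniteDimensional ℝ E] {U K : Set E}

lemma exists_contDiff_hasCompactSupport_eqOn {F : Type*} [NormedAddCommGroup F] [NormedSpace ℝ F]
    {f : E → F} (hf : ContDiffOn ℝ 1 f U) (hU : IsOpen U) (hK : IsCompact K) (hKU : K ⊆ U) :
    ∃ g : E → F, ContDiff ℝ 1 g ∧ HasCompactSupport g ∧ EqOn g f K := by
  obtain ⟨L, hL, hKL, hLU⟩ := exists_compact_between hK hU hKU
  obtain ⟨χ, hχK, hχL, -⟩ :=
    exists_contMDiffMap_one_nhds_of_subset_interior (n := 1) 𝓘(ℝ, E) hK.isClosed hKL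
  refine ⟨fun x => χ x • f x, contDiff_iff_contDiffAt.2 fun x => ?_,
    HasCompactSupport.intro hL fun x hx => by simp [hχL x hx],
    fun x hx => by simp [hχK.self_of_nhdsSet x hx]⟩
  by_cases hx : x ∈ L
  · exact (χ.contMDiff.contDiff.contDiffAt).smul (hf.contDiffAt (hU.mem_nhds (hLU hx)))
  · refine contDiffAt_const (c := (0 : F)) |>.congr_of_eventuallyEq ?_
    filter_upwards [hL.isClosed.isOpen_compl.mem_nhds hx] with y hy
    simp [hχL y hy]

lemma exists_flow_of_contDiffOn {f : E → E} (hf : ContDiffOn ℝ 1 f U) (hU : IsOpen U)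
    (hK : IsCompact K) (hKU : K ⊆ U) (R τ : ℝ≥0) :
    ∃ α : E × ℝ → E, ContinuousOn α (Metric.closedBall 0 R ×ˢ Icc (-τ : ℝ) τ) ∧
      ∀ x ∈ Metric.closedBall (0 : E) R, α (x, 0) = x ∧
        ∀ t ∈ Ioo (-τ : ℝ) τ, α (x, t) ∈ K → HasDerivAt (fun t => α (x, t)) (f (α (x, t))) t := by
  obtain ⟨g, hg, hgsupp, hgf⟩ := exists_contDiff_hasCompactSupport_eqOn hf hU hK hKU
  obtain ⟨C, hC⟩ := hg.lipschitzWith_of_hasCompactSupport hgsupp one_ne_zero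
  obtain ⟨B, hB⟩ := hgsupp.exists_bound_of_continuous hg.continuous
  have := FiniteDimensional.complete ℝ E
  obtain ⟨α, hcont, hα⟩ := exists_flow_of_lipschitzWith hC
    (fun x => (hB x).trans (le_coe_toNNReal B)) R τ
  exact ⟨α, hcont, fun x hx => ⟨(hα x hx).1, fun t ht hmem => hgf hmem ▸ (hα x hx).2 t ht⟩⟩

end Flow

section ProfileFamily

/-- The open set of states `(d, s, φ)` on which the rotated profile system is defined. -/
def profileDomain : Set (ℝ × ℝ × ℝ) := {p | 0 < p.2.1 ∧ 0 < p.2.1 ^ 2 - p.1 ^ 2}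

/-- The vector field of the rotated profile system on the states `(d, s, φ)`. -/
noncomputable def profileField (a : ℝ) (p : ℝ × ℝ × ℝ) : ℝ × ℝ × ℝ :=
  (cos p.2.2, sin p.2.2, profileCurvature a p.1 p.2.1 p.2.2)

lemma isOpen_profileDomain : IsOpen profileDomain :=
  (isOpen_Ioi.preimage (by fun_prop : Continuous fun p : ℝ × ℝ × ℝ => p.2.1)).inter
    (isOpen_Ioi.preimage (by fun_prop : Continuous fun p : ℝ × ℝ × ℝ => p.2.1 ^ 2 - p.1 ^ 2))

lemma contDiffOn_profileField (a : ℝ) : ContDiffOn ℝ 1 (profileField a) profileDomain := by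
  have hne : ∀ p ∈ profileDomain, p.2.1 ^ 2 - p.1 ^ 2 ≠ 0 := fun p hp => hp.2.ne'
  unfold profileField profileCurvature
  fun_prop (disch := assumption)

/-- A family of curves `t ↦ (d r t, s r t, φ r t)`, jointly continuous in `r` and `t`, starting
orthogonally to the diagonal at height `r` and solving the rotated profile system as long as they
stay in the set `K` of states. -/
structure ProfileFamily (a : ℝ) (K : Set (ℝ × ℝ × ℝ)) (R τ : ℝ) (d s φ : ℝ → ℝ → ℝ) : Prop where
  continuousAt : ∀ r ∈ Ioo 0 R, ∀ t ∈ Ioo (-τ) τ,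
    ContinuousAt (fun p : ℝ × ℝ => (d p.1 p.2, s p.1 p.2, φ p.1 p.2)) (r, t)
  d_zero : ∀ r ∈ Ioo 0 R, d r 0 = 0
  s_zero : ∀ r ∈ Ioo 0 R, s r 0 = r
  φ_zero : ∀ r ∈ Ioo 0 R, φ r 0 = 0
  isProfileAt : ∀ r ∈ Ioo 0 R, ∀ t ∈ Ioo (-τ) τ, (d r t, s r t, φ r t) ∈ K →
    IsProfileAt a (d r) (s r) (φ r) t

lemma exists_profileFamily (a : ℝ) {K : Set (ℝ × ℝ × ℝ)} (hK : IsCompact K)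
    (hKU : K ⊆ profileDomain) {R τ : ℝ} (hR : 0 ≤ R) (hτ : 0 ≤ τ) :
    ∃ d s φ, ProfileFamily a K R τ d s φ := by
  lift R to NNReal using hR
  lift τ to NNReal using hτ
  obtain ⟨α, hcont, hα⟩ :=
    exists_flow_of_contDiffOn (contDiffOn_profileField a) isOpen_profileDomain hK hKU R τ
  have hstart : ∀ r ∈ Ioo (0 : ℝ) R, ((0, r, 0) : ℝ × ℝ × ℝ) ∈ Metric.ball 0 (R : ℝ) := by
    intro r hr
    simpa [Prod.norm_def, abs_of_pos hr.1, hr.1.le] using hr.2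
  have hzero := fun r hr => (hα _ (Metric.ball_subset_closedBall (hstart r hr))).1
  refine ⟨fun r t => (α ((0, r, 0), t)).1, fun r t => (α ((0, r, 0), t)).2.1,
    fun r t => (α ((0, r, 0), t)).2.2,
    { continuousAt := fun r hr t ht => ?_
      d_zero := fun r hr => by simp [hzero r hr]
      s_zero := fun r hr => by simp [hzero r hr]
      φ_zero := fun r hr => by simp [hzero r hr]
      isProfileAt := fun r hr t ht hmem => ?_ }⟩
  · have hmem : Metric.closedBall (0 : ℝ × ℝ × ℝ) R ×ˢ Icc (-τ : ℝ) τ ∈ 𝓝 ((0, r, 0), t) :=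
      prod_mem_nhds (Metric.closedBall_mem_nhds_of_mem (hstart r hr)) (Icc_mem_nhds ht.1 ht.2)
    exact ContinuousAt.comp (f := fun p : ℝ × ℝ => ((0, p.1, 0), p.2))
      (hcont.continuousAt hmem) (by fun_prop)
  · have hderiv := (hα _ (Metric.ball_subset_closedBall (hstart r hr))).2 t ht hmem
    exact ⟨hderiv.fst, hderiv.snd.fst, hderiv.snd.snd, (hKU hmem).1, (hKU hmem).2⟩

namespace ProfileFamily

variable {K : Set (ℝ × ℝ × ℝ)} {R τ r : ℝ} {d s φ : ℝ → ℝ → ℝ}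

lemma profileArc (h : ProfileFamily a K R τ d s φ) (hr : r ∈ Ioo 0 R) (hT : T ∈ Ico 0 τ)
    (hmem : ∀ t ∈ Icc 0 T, (d r t, s r t, φ r t) ∈ K) : ProfileArc a (d r) (s r) (φ r) T :=
  ⟨hT.1, h.d_zero r hr, h.φ_zero r hr, fun t ht =>
    h.isProfileAt r hr t ⟨by linarith [ht.1, hT.2, hT.1], ht.2.trans_lt hT.2⟩ (hmem t ht)⟩

lemma continuousAt_time (h : ProfileFamily a K R τ d s φ) (hr : r ∈ Ioo 0 R)
    (ht : t ∈ Ioo (-τ) τ) : ContinuousAt (fun t => (d r t, s r t, φ r t)) t :=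
  ContinuousAt.comp (f := fun t => (r, t)) (h.continuousAt r hr t ht) (by fun_prop)

end ProfileFamily

end ProfileFamily

section ExcursionRegion

variable {lo M q : ℝ}

/-- A region of states `(d, s, φ)`, chosen so that every excursion obeying the a priori bounds
`lo ≤ s ≤ M` and `q ≤ s² - d²` stays in it. -/
def excursionRegion (lo M q : ℝ) : Set (ℝ × ℝ × ℝ) :=
  {p | (lo ≤ p.2.1 ∧ p.2.1 ≤ M) ∧ q ≤ p.2.1 ^ 2 - p.1 ^ 2 ∧ 0 ≤ p.2.2 ∧ p.2.2 ≤ π}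

lemma excursionRegion_subset_profileDomain (hlo : 0 < lo) (hq : 0 < q) :
    excursionRegion lo M q ⊆ profileDomain :=
  fun _ hp => ⟨hlo.trans_le hp.1.1, hq.trans_le hp.2.1⟩

lemma isClosed_excursionRegion : IsClosed (excursionRegion lo M q) := by
  have hs : Continuous fun p : ℝ × ℝ × ℝ => p.2.1 := by fun_prop
  have hφ : Continuous fun p : ℝ × ℝ × ℝ => p.2.2 := by fun_prop
  have hgap : Continuous fun p : ℝ × ℝ × ℝ => p.2.1 ^ 2 - p.1 ^ 2 := by fun_prop
  exact (isClosed_Icc.preimage hs).inter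
    ((isClosed_Ici.preimage hgap).inter (isClosed_Icc.preimage hφ))

lemma isCompact_excursionRegion (hlo : 0 < lo) (hq : 0 < q) :
    IsCompact (excursionRegion lo M q) := by
  refine (isCompact_Icc (a := ((-M, lo, 0) : ℝ × ℝ × ℝ)) (b := (M, M, π))).of_isClosed_subset
    isClosed_excursionRegion fun p hp => ?_
  have hd := abs_le.1 (abs_le_of_sq_le_sq (a := p.1) (by linarith [hp.2.1]) (hlo.le.trans hp.1.1))
  exact ⟨⟨by linarith [hp.1.2], hp.1.1, hp.2.2.1⟩, ⟨hd.2.trans hp.1.2, hp.1.2, hp.2.2.2⟩⟩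

end ExcursionRegion

lemma ClosedExcursion.pi_div_two_lt_φ_T (h : ClosedExcursion a d s φ T) : π / 2 < φ T := by
  obtain ⟨u, hu⟩ := h.exists_isApex
  exact hu.lt_after T ⟨(h.apex_mem hu).2, le_rfl⟩

namespace ProfileFamily

variable {K : Set (ℝ × ℝ × ℝ)} {R τ r : ℝ} {d s φ : ℝ → ℝ → ℝ}

lemma mem_of_forall_mem_Ico (h : ProfileFamily a K R τ d s φ) (hr : r ∈ Ioo 0 R)
    (hT : T ∈ Ioo 0 τ) {C : Set (ℝ × ℝ × ℝ)} (hC : IsClosed C)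
    (hmem : ∀ t ∈ Ico 0 T, (d r t, s r t, φ r t) ∈ C) :
    ∀ t ∈ Icc 0 T, (d r t, s r t, φ r t) ∈ C := by
  have hcont : ContinuousOn (fun t => (d r t, s r t, φ r t)) (closure (Ico 0 T)) := by
    rw [closure_Ico hT.1.ne]
    exact fun t ht => (h.continuousAt_time hr
      ⟨by linarith [ht.1, hT.1, hT.2], ht.2.trans_lt hT.2⟩).continuousWithinAt
  have hmaps := MapsTo.closure_of_continuousOn hmem hcont
  rwa [closure_Ico hT.1.ne, hC.closure_eq] at hmaps

lemma exists_closedExcursion (h : ProfileFamily a K R τ d s φ) (ha : 0 < a) (hr : r ∈ Ioo 0 R)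
    (hra : r ^ 2 < 4 * a) (hT : T ∈ Ico 0 τ)
    (hmem : ∀ t ∈ Icc 0 T, (d r t, s r t, φ r t) ∈ K ∧ φ r t ≤ π) (hd : ∃ t ∈ Ioc 0 T, d r t ≤ 0) :
    ∃ T, ClosedExcursion a (d r) (s r) (φ r) T := by
  obtain ⟨T', -, hT'⟩ := (h.profileArc hr hT fun t ht => (hmem t ht).1).exists_closedExcursion ha
    (by rwa [h.s_zero r hr]) (fun t ht => (hmem t ht).2) hd
  exact ⟨T', hT'⟩

lemma eventually_exists_closedExcursion (h : ProfileFamily a K R τ d s φ) (ha : 0 < a)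
    (hr : r ∈ Ioo 0 R) (hra : r ^ 2 < 4 * a) (hT : T ∈ Ioo 0 τ)
    (hmem : ∀ t ∈ Icc 0 T, (d r t, s r t, φ r t) ∈ interior K ∧ φ r t < π) (hd : d r T < 0) :
    ∀ᶠ ρ in 𝓝 r, ∃ T, ClosedExcursion a (d ρ) (s ρ) (φ ρ) T := by
  have hτ : ∀ t ∈ Icc 0 T, t ∈ Ioo (-τ) τ := fun t ht =>
    ⟨by linarith [ht.1, hT.1, hT.2], ht.2.trans_lt hT.2⟩
  have hnear : ∀ᶠ ρ in 𝓝 r, ∀ t ∈ Icc 0 T, (d ρ t, s ρ t, φ ρ t) ∈ interior K ∧ φ ρ t < π :=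
    isCompact_Icc.eventually_forall_of_forall_eventually
      (P := fun ρ t => (d ρ t, s ρ t, φ ρ t) ∈ interior K ∧ φ ρ t < π) fun t ht =>
        have hcont := h.continuousAt r hr t (hτ t ht)
        (hcont.eventually_mem (isOpen_interior.mem_nhds (hmem t ht).1)).and
          (hcont.snd.snd.eventually_lt_const (hmem t ht).2)
  have hneg : ∀ᶠ ρ in 𝓝 r, d ρ T < 0 :=
    have hslice : ContinuousAt (fun ρ => d ρ T) r :=
      ContinuousAt.comp (f := fun ρ => (ρ, T)) (h.continuousAt r hr T (hτ T ⟨hT.1.le, le_rfl⟩)).fst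
        (by fun_prop)
    hslice.eventually_lt_const hd
  filter_upwards [hnear, hneg, Ioo_mem_nhds hr.1 hr.2,
    ((continuous_pow 2).tendsto r).eventually_lt_const hra] with ρ hρ hdρ hρR hρa
  exact h.exists_closedExcursion ha hρR hρa ⟨hT.1.le, hT.2⟩
    (fun t ht => ⟨interior_subset (hρ t ht).1, (hρ t ht).2.le⟩) ⟨T, ⟨hT.1, le_rfl⟩, hdρ.le⟩

end ProfileFamily

/-- A family of profile curves containing the shooting curves from all heights in `[lo, hi]`, in
which the shooting curves follow the rotated profile system for as long as they are excursions,
thanks to the a priori bounds `M` and `q` on closed excursions. -/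
structure ShootingFamily (a lo hi M q : ℝ) (K : Set (ℝ × ℝ × ℝ)) (d s φ : ℝ → ℝ → ℝ) : Prop
    extends ProfileFamily a K (hi + 1) (3 * M + 1) d s φ where
  isCompact : IsCompact K
  a_pos : 0 < a
  lo_pos : 0 < lo
  hi_le : hi ≤ M
  hi_sq_lt : hi ^ 2 < 4 * a
  q_le : q ≤ lo ^ 2
  region_subset : excursionRegion lo M q ⊆ interior K
  s_T_le : ∀ {d s φ : ℝ → ℝ} {T : ℝ}, ClosedExcursion a d s φ T → lo ≤ s 0 → s T ≤ M
  le_gap : ∀ {d s φ : ℝ → ℝ} {T : ℝ}, Excursion a d s φ T → lo ≤ s 0 →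
    ∀ t ∈ Icc 0 T, s t ≤ M → q ≤ s t ^ 2 - d t ^ 2

lemma exists_shootingFamily (ha : 1 ≤ a) {lo hi : ℝ} (hlo : 0 < lo) (hlohi : lo ≤ hi)
    (hhi : hi ^ 2 < 4 * a) (z : ℝ) :
    ∃ M ≥ z, ∃ q K d s φ, ShootingFamily a lo hi M q K d s φ := by
  obtain ⟨M, hM⟩ := exists_forall_s_T_le ha hlo
  obtain ⟨q, hq, hgap⟩ := exists_forall_le_gap ha hlo (max M (max hi z))
  have hhiM : hi ≤ max M (max hi z) := (le_max_left _ _).trans (le_max_right _ _)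
  have hq' : 0 < min q (lo ^ 2) := by positivity
  obtain ⟨K, hK, hQK, hKU⟩ := exists_compact_between
    (isCompact_excursionRegion (M := max M (max hi z)) hlo hq') isOpen_profileDomain
    (excursionRegion_subset_profileDomain hlo hq')
  obtain ⟨d, s, φ, hfam⟩ := exists_profileFamily a hK hKU (R := hi + 1)
    (τ := 3 * max M (max hi z) + 1) (by linarith) (by linarith)
  exact ⟨_, (le_max_right _ _).trans (le_max_right _ _), _, K, d, s, φ,
    { toProfileFamily := hfam
      isCompact := hK
      a_pos := one_pos.trans_le ha
      lo_pos := hlo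
      hi_le := hhiM
      hi_sq_lt := hhi
      q_le := min_le_right _ _
      region_subset := hQK
      s_T_le := fun h hs => (hM h hs).trans (le_max_left _ _)
      le_gap := fun h hs t ht hst => (min_le_left _ _).trans (hgap h hs t ht hst) }⟩

namespace ShootingFamily

variable {lo hi M q r : ℝ} {K : Set (ℝ × ℝ × ℝ)} {d s φ : ℝ → ℝ → ℝ}

lemma mem_Ioo (h : ShootingFamily a lo hi M q K d s φ) (hr : r ∈ Icc lo hi) :
    r ∈ Ioo 0 (hi + 1) :=
  ⟨h.lo_pos.trans_le hr.1, by linarith [hr.2]⟩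

lemma sq_lt (h : ShootingFamily a lo hi M q K d s φ) (hr : r ∈ Icc lo hi) : r ^ 2 < 4 * a :=
  (pow_le_pow_left₀ (h.mem_Ioo hr).1.le hr.2 2).trans_lt h.hi_sq_lt

lemma start_mem_interior (h : ShootingFamily a lo hi M q K d s φ) (hr : r ∈ Icc lo hi) :
    (d r 0, s r 0, φ r 0) ∈ interior K := by
  rw [h.d_zero r (h.mem_Ioo hr), h.s_zero r (h.mem_Ioo hr), h.φ_zero r (h.mem_Ioo hr)]
  refine h.region_subset ⟨⟨hr.1, hr.2.trans h.hi_le⟩, ?_, le_rfl, pi_pos.le⟩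
  have := pow_le_pow_left₀ h.lo_pos.le hr.1 2
  linarith [h.q_le]

lemma eventually_isProfileAt_zero (h : ShootingFamily a lo hi M q K d s φ) (hr : r ∈ Icc lo hi) :
    ∀ᶠ t in 𝓝 0, IsProfileAt a (d r) (s r) (φ r) t := by
  have hτ : (0 : ℝ) ∈ Ioo (-(3 * M + 1)) (3 * M + 1) := by
    constructor <;> linarith [h.lo_pos, hr.1, hr.2, h.hi_le]
  filter_upwards [(h.continuousAt_time (h.mem_Ioo hr) hτ).eventually_mem
    (isOpen_interior.mem_nhds (h.start_mem_interior hr)), Ioo_mem_nhds hτ.1 hτ.2] with t hmem ht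
  exact h.isProfileAt r (h.mem_Ioo hr) t ht (interior_subset hmem)

lemma mem_region (h : ShootingFamily a lo hi M q K d s φ) (hr : r ∈ Icc lo hi)
    (he : Excursion a (d r) (s r) (φ r) T) (hM : s r T ≤ M) (ht : t ∈ Icc 0 T) :
    (d r t, s r t, φ r t) ∈ excursionRegion lo M q := by
  have hlo : lo ≤ s r 0 := by
    rw [h.s_zero r (h.mem_Ioo hr)]
    exact hr.1
  have htM := he.s_le_of_s_T_le hM ht
  refine ⟨⟨hlo.trans (he.s_zero_le ht), htM⟩, h.le_gap he hlo t ht htM, ?_, he.φ_le_pi t ht⟩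
  rcases ht.1.eq_or_lt with rfl | ht0
  · exact he.φ_zero.ge
  · exact (he.φ_pos t ⟨ht0, ht.2⟩).le

lemma s_T_le_of_closedExcursion (h : ShootingFamily a lo hi M q K d s φ) (hr : r ∈ Icc lo hi)
    (he : ClosedExcursion a (d r) (s r) (φ r) T) : s r T ≤ M :=
  h.s_T_le he (by rw [h.s_zero r (h.mem_Ioo hr)]; exact hr.1)

lemma T_le_of_closedExcursion (h : ShootingFamily a lo hi M q K d s φ) (hr : r ∈ Icc lo hi)
    (he : ClosedExcursion a (d r) (s r) (φ r) T) : T ≤ 3 * M :=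
  he.T_le_three_mul.trans (by linarith [h.s_T_le_of_closedExcursion hr he])

lemma exists_closedExcursion_of_tendsto (h : ShootingFamily a lo hi M q K d s φ) {ρ T : ℕ → ℝ}
    {T₀ : ℝ} (hρ : ∀ k, ρ k ∈ Icc lo hi)
    (hT : ∀ k, ClosedExcursion a (d (ρ k)) (s (ρ k)) (φ (ρ k)) (T k))
    (hρr : Tendsto ρ atTop (𝓝 r)) (hT₀ : Tendsto T atTop (𝓝 T₀)) :
    ∃ T, ClosedExcursion a (d r) (s r) (φ r) T := by
  have hr : r ∈ Icc lo hi := isClosed_Icc.mem_of_tendsto hρr (.of_forall hρ)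
  have hT₀mem : T₀ ∈ Icc 0 (3 * M) := isClosed_Icc.mem_of_tendsto hT₀ <|
    .of_forall fun k => ⟨(hT k).T_pos.le, h.T_le_of_closedExcursion (hρ k) (hT k)⟩
  have hlim : ∀ t ∈ Icc 0 T₀, Tendsto (fun k => (d (ρ k) (min t (T k)), s (ρ k) (min t (T k)),
      φ (ρ k) (min t (T k)))) atTop (𝓝 (d r t, s r t, φ r t)) := by
    intro t ht
    have hmin := (tendsto_const_nhds (x := t)).min hT₀
    rw [min_eq_left ht.2] at hmin
    exact (h.continuousAt r (h.mem_Ioo hr) t ⟨by linarith [ht.1, ht.2, hT₀mem.2],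
      by linarith [ht.2, hT₀mem.2]⟩).tendsto.comp (hρr.prodMk_nhds hmin)
  have hmem : ∀ t ∈ Icc 0 T₀, (d r t, s r t, φ r t) ∈ excursionRegion lo M q := fun t ht =>
    isClosed_excursionRegion.mem_of_tendsto (hlim t ht) <| .of_forall fun k =>
      h.mem_region (hρ k) (hT k).toExcursion (h.s_T_le_of_closedExcursion (hρ k) (hT k))
        ⟨le_min ht.1 (hT k).T_pos.le, min_le_right _ _⟩
  have hend : Tendsto (fun k => (d (ρ k) (T k), s (ρ k) (T k), φ (ρ k) (T k))) atTop
      (𝓝 (d r T₀, s r T₀, φ r T₀)) :=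
    (h.continuousAt r (h.mem_Ioo hr) T₀ ⟨by linarith [hT₀mem.1, hT₀mem.2],
      by linarith [hT₀mem.2]⟩).tendsto.comp (hρr.prodMk_nhds hT₀)
  have hd : d r T₀ = 0 := tendsto_nhds_unique hend.fst_nhds
    (by simp only [(hT _).d_T, tendsto_const_nhds])
  have hφ : π / 2 ≤ φ r T₀ := ge_of_tendsto' hend.snd_nhds.snd_nhds fun k =>
    (hT k).pi_div_two_lt_φ_T.le
  have hT₀pos : 0 < T₀ := hT₀mem.1.lt_of_ne fun h0 => by
    rw [← h0, h.φ_zero r (h.mem_Ioo hr)] at hφ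
    linarith [pi_pos]
  exact h.exists_closedExcursion h.a_pos (h.mem_Ioo hr) (h.sq_lt hr)
    ⟨hT₀mem.1, by linarith [hT₀mem.2]⟩
    (fun t ht => ⟨interior_subset (h.region_subset (hmem t ht)), (hmem t ht).2.2.2⟩)
    ⟨T₀, ⟨hT₀pos, le_rfl⟩, hd.le⟩

lemma isClosed_setOf_closedExcursion (h : ShootingFamily a lo hi M q K d s φ) :
    IsClosed ({r | ∃ T, ClosedExcursion a (d r) (s r) (φ r) T} ∩ Icc lo hi) := by
  refine IsSeqClosed.isClosed fun ρ r hρ hlim =>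
    ⟨?_, isClosed_Icc.mem_of_tendsto hlim (.of_forall fun k => (hρ k).2)⟩
  choose T hT using fun k => (hρ k).1
  obtain ⟨T₀, -, ψ, hψ, hT₀⟩ := isCompact_Icc.tendsto_subseq fun k =>
    ⟨(hT k).T_pos.le, h.T_le_of_closedExcursion (hρ k).2 (hT k)⟩
  exact h.exists_closedExcursion_of_tendsto (fun k => (hρ (ψ k)).2) (fun k => hT (ψ k))
    (hlim.comp hψ.tendsto_atTop) hT₀

lemma eventually_exists_closedExcursion (h : ShootingFamily a lo hi M q K d s φ)
    (hr : r ∈ Icc lo hi) (he : ClosedExcursion a (d r) (s r) (φ r) T) (hT : φ r T ≠ π) :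
    ∀ᶠ ρ in 𝓝 r, ∃ T, ClosedExcursion a (d ρ) (s ρ) (φ ρ) T := by
  have hTM := h.T_le_of_closedExcursion hr he
  have hφT : φ r T < π := (he.φ_le_pi T he.T_mem).lt_of_ne hT
  have hmem : ∀ t ∈ Icc 0 T, (d r t, s r t, φ r t) ∈ interior K ∧ φ r t < π := fun t ht =>
    ⟨h.region_subset (h.mem_region hr he.toExcursion (h.s_T_le_of_closedExcursion hr he) ht),
      ht.2.eq_or_lt.elim (fun htT => htT ▸ hφT) fun htT => he.φ_lt_pi ⟨ht.1, htT⟩⟩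
  have hcont := h.continuousAt_time (h.mem_Ioo hr) (t := T)
    ⟨by linarith [he.T_pos], by linarith⟩
  have hafter : ∀ᶠ t in 𝓝 T, ((d r t, s r t, φ r t) ∈ interior K ∧ φ r t < π) ∧ t < 3 * M + 1 :=
    ((hcont.eventually_mem (isOpen_interior.mem_nhds (hmem T he.T_mem).1)).and
      (hcont.snd.snd.eventually_lt_const hφT)).and (eventually_lt_nhds (by linarith))
  obtain ⟨v, hv, hvmem⟩ := mem_nhdsGE_iff_exists_Icc_subset.1
    (hafter.filter_mono nhdsWithin_le_nhds)
  have hcross : ∀ᶠ t in 𝓝[>] T, 0 < -d r t :=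
    eventually_nhdsGT_pos_of_hasDerivAt (he.isProfileAt T he.T_mem).hasDerivAt_d.fun_neg
      (by simp [he.d_T]) (neg_pos.2 (cos_neg_of_pi_div_two_lt_of_lt (he.pi_div_two_lt_φ_T)
        (by linarith [pi_pos])))
  obtain ⟨v', hdv', hv'⟩ := (hcross.and (Ioc_mem_nhdsGT hv)).exists
  refine h.toProfileFamily.eventually_exists_closedExcursion h.a_pos (h.mem_Ioo hr) (h.sq_lt hr)
    ⟨he.T_pos.trans hv'.1, (hvmem ⟨hv'.1.le, hv'.2⟩).2⟩ (fun t ht => ?_) (neg_pos.1 hdv')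
  rcases le_total t T with htT | hTt
  · exact hmem t ⟨ht.1, htT⟩
  · exact (hvmem ⟨hTt, ht.2.trans hv'.2⟩).1

lemma excursion_of_forall_mem_Ico (h : ShootingFamily a lo hi M q K d s φ) (hr : r ∈ Icc lo hi)
    (hno : ¬ ∃ T, ClosedExcursion a (d r) (s r) (φ r) T) (hT : T ∈ Ioo 0 (3 * M + 1)) {z : ℝ}
    (hmem : ∀ t ∈ Ico 0 T, (d r t, s r t, φ r t) ∈ interior K ∧ φ r t < π ∧ s r t < z) :
    Excursion a (d r) (s r) (φ r) T ∧ s r T ≤ z := by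
  have hr' := h.mem_Ioo hr
  have hφ : IsClosed {p : ℝ × ℝ × ℝ | p.2.2 ≤ π} := isClosed_le (by fun_prop) continuous_const
  have hs : IsClosed {p : ℝ × ℝ × ℝ | p.2.1 ≤ z} := isClosed_le (by fun_prop) continuous_const
  have hclosed := h.mem_of_forall_mem_Ico hr' hT ((h.isCompact.isClosed.inter hφ).inter hs)
    fun t ht => ⟨⟨interior_subset (hmem t ht).1, (hmem t ht).2.1.le⟩, (hmem t ht).2.2.le⟩
  refine ⟨{ toProfileArc := h.profileArc hr' ⟨hT.1.le, hT.2⟩ fun t ht => (hclosed t ht).1.1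
            a_pos := h.a_pos
            s_zero_sq_lt := by rw [h.s_zero r hr']; exact h.sq_lt hr
            d_pos := fun t ht => not_le.1 fun hd => hno ?_
            φ_le_pi := fun t ht => (hclosed t ht).1.2 }, (hclosed T ⟨hT.1.le, le_rfl⟩).2⟩
  exact h.exists_closedExcursion h.a_pos hr' (h.sq_lt hr) ⟨hT.1.le, hT.2⟩
    (fun t ht => (hclosed t ht).1) ⟨t, Ioo_subset_Ioc_self ht, hd⟩

/- Without a closed excursion, the curve from height `lo` could never leave the open set
`{φ < π, s < z}` of states, although excursions below height `z` last at most for time `3 * z`. -/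
lemma exists_closedExcursion_lo (h : ShootingFamily a lo hi M q K d s φ) (hlohi : lo ≤ hi) {z : ℝ}
    (hz : lo < z) (hzM : z ≤ M) (hsmall : ∀ {d s φ : ℝ → ℝ} {T : ℝ}, Excursion a d s φ T →
      s 0 = lo → s T ≤ z → φ T < π ∧ s T < z) :
    ∃ T, ClosedExcursion a (d lo) (s lo) (φ lo) T := by
  by_contra hno
  have hr : lo ∈ Icc lo hi := left_mem_Icc.2 hlohi
  have hr' := h.mem_Ioo hr
  have hM : 0 < M := by linarith [h.lo_pos]
  let O : Set (ℝ × ℝ × ℝ) := interior K ∩ ({p | p.2.2 < π} ∩ {p | p.2.1 < z})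
  have hO : IsOpen O := isOpen_interior.inter
    ((isOpen_lt (by fun_prop) continuous_const).inter (isOpen_lt (by fun_prop) continuous_const))
  have hstep : ∀ T ∈ Ioo 0 (3 * M + 1), (∀ t ∈ Ico 0 T, (d lo t, s lo t, φ lo t) ∈ O) →
      (d lo T, s lo T, φ lo T) ∈ O ∧ T ≤ 3 * M := by
    intro T hT hmem
    obtain ⟨he, hsz⟩ := h.excursion_of_forall_mem_Ico hr hno hT hmem
    exact ⟨⟨h.region_subset (h.mem_region hr he (hsz.trans hzM) he.T_mem),
      hsmall he (h.s_zero lo hr') hsz⟩, he.T_le_three_mul.trans (by linarith)⟩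
  have hin : ∀ t ∈ Icc 0 (3 * M + 1 / 2), (d lo t, s lo t, φ lo t) ∈ O := by
    by_contra! hexit
    have hcont : ContinuousOn (fun t => (d lo t, s lo t, φ lo t)) (Icc 0 (3 * M + 1 / 2)) :=
      fun t ht => (h.continuousAt_time hr' ⟨by linarith [ht.1],
        by linarith [ht.2]⟩).continuousWithinAt
    obtain ⟨τ, hτ, hout, hin⟩ := exists_first_exit hcont hO
      ⟨h.start_mem_interior hr, (h.φ_zero lo hr').trans_lt pi_pos,
        (h.s_zero lo hr').trans_lt hz⟩ hexit
    exact hout (hstep τ ⟨hτ.1, by linarith [hτ.2]⟩ hin).1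
  linarith [(hstep (3 * M + 1 / 2) ⟨by linarith, by linarith⟩ fun t ht =>
    hin t (Ico_subset_Icc_self ht)).2]

theorem exists_closedExcursion_φ_T_eq_pi (h : ShootingFamily a lo hi M q K d s φ)
    (hlohi : lo ≤ hi) (hlo : ∃ T, ClosedExcursion a (d lo) (s lo) (φ lo) T)
    (hhi : ∀ T, ¬ ClosedExcursion a (d hi) (s hi) (φ hi) T) :
    ∃ r ∈ Icc lo hi, ∃ T, ClosedExcursion a (d r) (s r) (φ r) T ∧ φ r T = π := by
  by_contra! hne
  have hsub : Icc lo hi ⊆ {r | ∃ T, ClosedExcursion a (d r) (s r) (φ r) T} := by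
    refine h.isClosed_setOf_closedExcursion.Icc_subset_of_forall_exists_gt hlo
      fun r ⟨⟨T, hT⟩, hr⟩ y hy => ?_
    have hr' := Ico_subset_Icc_self hr
    exact (((h.eventually_exists_closedExcursion hr' hT (hne r hr' T hT)).filter_mono
      nhdsWithin_le_nhds).and (Ioc_mem_nhdsGT hy)).exists
  obtain ⟨T, hT⟩ := hsub (right_mem_Icc.2 hlohi)
  exact hhi T hT

end ShootingFamily

theorem exists_closedExcursion_φ_T_eq_pi (ha : 1 ≤ a) :
    ∃ (d s φ : ℝ → ℝ) (T : ℝ), ClosedExcursion a d s φ T ∧ φ T = π ∧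
      ∀ᶠ t in 𝓝 0, IsProfileAt a d s φ t := by
  obtain ⟨z, hz, hsmall⟩ := exists_eventually_φ_T_lt_pi_and_s_T_lt ha
  have hhi : 0 < √(4 * a - 1 / 50) := sqrt_pos.2 (by linarith)
  have hhisq : √(4 * a - 1 / 50) ^ 2 = 4 * a - 1 / 50 := sq_sqrt (by linarith)
  obtain ⟨lo, hsmall, hlo, hloz⟩ := (hsmall.and (Ioo_mem_nhdsGT (lt_min hhi hz))).exists
  obtain ⟨hlohi, hloz⟩ := lt_min_iff.1 hloz
  obtain ⟨M, hzM, q, K, d, s, φ, h⟩ := exists_shootingFamily ha hlo hlohi.le (by linarith) z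
  obtain ⟨r, hr, T, hT, hφT⟩ := h.exists_closedExcursion_φ_T_eq_pi hlohi.le
    (h.exists_closedExcursion_lo hlohi.le hloz hzM hsmall) fun T hT => hT.s_zero_sq_ne ha <| by
      rw [h.s_zero _ (h.mem_Ioo (right_mem_Icc.2 hlohi.le)), hhisq]
  exact ⟨d r, s r, φ r, T, hT, hφT, h.eventually_isProfileAt_zero hr⟩

section OriginalCoordinates

/-- The coordinate `x` of the profile curve with rotated coordinates `(d, s)`, traversed backwards
from time `T`. -/
noncomputable def reversedX (d s : ℝ → ℝ) (T t : ℝ) : ℝ := (s (T - t) + d (T - t)) / √2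

/-- The coordinate `y` of the profile curve with rotated coordinates `(d, s)`, traversed backwards
from time `T`. -/
noncomputable def reversedY (d s : ℝ → ℝ) (T t : ℝ) : ℝ := (s (T - t) - d (T - t)) / √2

/-- The tangent angle with the `x`-axis of the profile curve with tangent angle `φ` in rotated
coordinates, traversed backwards from time `T`. -/
noncomputable def reversedAngle (φ : ℝ → ℝ) (T t : ℝ) : ℝ := φ (T - t) - π - π / 4

lemma cos_reversedAngle (φ : ℝ → ℝ) (T t : ℝ) :
    cos (reversedAngle φ T t) = -(cos (φ (T - t)) + sin (φ (T - t))) / √2 := by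
  rw [reversedAngle, cos_sub, cos_sub_pi, sin_sub_pi, cos_pi_div_four, sin_pi_div_four,
    sqrt_div_self']
  ring

lemma sin_reversedAngle (φ : ℝ → ℝ) (T t : ℝ) :
    sin (reversedAngle φ T t) = (cos (φ (T - t)) - sin (φ (T - t))) / √2 := by
  rw [reversedAngle, sin_sub, cos_sub_pi, sin_sub_pi, cos_pi_div_four, sin_pi_div_four,
    sqrt_div_self']
  ring

lemma reversedY_lt_reversedX (hd : 0 < d (T - t)) : reversedY d s T t < reversedX d s T t :=
  div_lt_div_of_pos_right (by linarith) (by positivity)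

lemma injOn_reversed (hs : StrictMonoOn s (Icc 0 T)) :
    InjOn (fun t => (reversedX d s T t, reversedY d s T t)) (Icc 0 T) := by
  intro u hu v hv huv
  obtain ⟨hx, hy⟩ := Prod.mk.inj huv
  rw [reversedX, reversedX, div_left_inj' (by positivity)] at hx
  rw [reversedY, reversedY, div_left_inj' (by positivity)] at hy
  have hsuv := hs.injOn (show T - u ∈ Icc 0 T from ⟨by linarith [hu.2], by linarith [hu.1]⟩)
    (show T - v ∈ Icc 0 T from ⟨by linarith [hv.2], by linarith [hv.1]⟩) (by linarith)
  linarith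

namespace IsProfileAt

lemma neg_s_lt_d (h : IsProfileAt a d s φ t) : -s t < d t :=
  (abs_lt_of_sq_lt_sq' (sub_pos.1 h.gap_pos) h.s_pos.le).1

lemma reversedX_pos (h : IsProfileAt a d s φ (T - t)) : 0 < reversedX d s T t :=
  div_pos (by linarith [h.neg_s_lt_d]) (by positivity)

lemma reversedY_pos (h : IsProfileAt a d s φ (T - t)) : 0 < reversedY d s T t :=
  div_pos (sub_pos.2 h.d_lt_s) (by positivity)

lemma hasDerivAt_reversedX (h : IsProfileAt a d s φ (T - t)) :
    HasDerivAt (reversedX d s T) (cos (reversedAngle φ T t)) t :=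
  (((h.hasDerivAt_s.fun_add h.hasDerivAt_d).comp_const_sub T t).div_const √2).congr_deriv (by
    rw [cos_reversedAngle]
    ring)

lemma hasDerivAt_reversedY (h : IsProfileAt a d s φ (T - t)) :
    HasDerivAt (reversedY d s T) (sin (reversedAngle φ T t)) t :=
  (((h.hasDerivAt_s.fun_sub h.hasDerivAt_d).comp_const_sub T t).div_const √2).congr_deriv (by
    rw [sin_reversedAngle]
    ring)

lemma neg_profileCurvature_eq (h : IsProfileAt a d s φ (T - t)) :
    -profileCurvature a (d (T - t)) (s (T - t)) (φ (T - t)) =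
      (reversedX d s T t / 2 - a / reversedX d s T t) * sin (reversedAngle φ T t)
        + (a / reversedY d s T t - reversedY d s T t / 2) * cos (reversedAngle φ T t) := by
  have hx : s (T - t) + d (T - t) ≠ 0 := by linarith [h.neg_s_lt_d]
  have hy : s (T - t) - d (T - t) ≠ 0 := (sub_pos.2 h.d_lt_s).ne'
  have hsq : √2 ^ 2 = 2 := sq_sqrt zero_le_two
  rw [cos_reversedAngle, sin_reversedAngle, profileCurvature, reversedX, reversedY, sq_sub_sq]
  field_simp
  rw [hsq]
  ring

lemma hasDerivAt_reversedAngle (h : IsProfileAt a d s φ (T - t)) :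
    HasDerivAt (reversedAngle φ T)
      ((reversedX d s T t / 2 - a / reversedX d s T t) * sin (reversedAngle φ T t)
        + (a / reversedY d s T t - reversedY d s T t / 2) * cos (reversedAngle φ T t)) t :=
  h.neg_profileCurvature_eq ▸
    ((h.hasDerivAt_φ.comp_const_sub T t).sub_const π).sub_const (π / 4)

end IsProfileAt

namespace ClosedExcursion

lemma strictMonoOn_s (h : ClosedExcursion a d s φ T) : StrictMonoOn s (Icc 0 T) :=
  fun _ hu _ hv huv => lt_of_hasDerivAt_pos huv
    (fun t ht => (h.isProfileAt t ⟨hu.1.trans ht.1, ht.2.trans hv.2⟩).hasDerivAt_s) fun t ht =>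
    have ht' : t ∈ Ioo 0 T := ⟨hu.1.trans_lt ht.1, ht.2.trans_le hv.2⟩
    sin_pos_of_pos_of_lt_pi (h.φ_pos t (Ioo_subset_Ioc_self ht'))
      (h.φ_lt_pi (Ioo_subset_Ico_self ht'))

lemma exists_forall_isProfileAt_sub (h : ClosedExcursion a d s φ T)
    (hzero : ∀ᶠ t in 𝓝 0, IsProfileAt a d s φ t) :
    ∃ ε > 0, ∀ t ∈ Ico 0 (T + ε), IsProfileAt a d s φ (T - t) := by
  obtain ⟨ε, hε, hball⟩ := Metric.eventually_nhds_iff.1 hzero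
  refine ⟨ε, hε, fun t ht => ?_⟩
  rcases le_total t T with htT | hTt
  · exact h.isProfileAt _ ⟨sub_nonneg.2 htT, sub_le_self T ht.1⟩
  · exact hball (by rw [dist_zero_right, norm_eq_abs, abs_lt]; constructor <;> linarith [ht.2])

end ClosedExcursion

lemma shootingSol_reversed {n : ℕ} {T' : ℝ} (hT' : 0 < T') (hd : d T = 0) (hφ : φ T = π)
    (h : ∀ t ∈ Ico 0 T', IsProfileAt (n - 1) d s φ (T - t)) :
    ShootingSol n (s T) T' (reversedX d s T) (reversedY d s T) (reversedAngle φ T) :=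
  ⟨hT', by simp [reversedX, hd], by simp [reversedY, hd], by simp [reversedAngle, hφ],
    fun t ht => ⟨(h t ht).reversedX_pos, (h t ht).reversedY_pos, (h t ht).hasDerivAt_reversedX,
      (h t ht).hasDerivAt_reversedY, (h t ht).hasDerivAt_reversedAngle⟩⟩

end OriginalCoordinates

/-- For every integer `n ≥ 2` there exist `R* > 0` and a time
`t₁ ∈ (0, T_{R*})` such that the shooting solution satisfies `x(t₁) = y(t₁)`,
`θ(t₁) = −5π/4`, `x(t) > y(t) > 0` on `(0, t₁)`, and `t ↦ (x t, y t)` is injective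
on `[0, t₁]`: the geodesic segment starts and ends orthogonally on the diagonal
and lies strictly below it in between. -/
theorem exists_geodesic_segment_orthogonal_to_diagonal (n : ℕ) (hn : 2 ≤ n) :
    ∃ (Rstar T t₁ : ℝ) (x y θ : ℝ → ℝ),
      0 < Rstar ∧ ShootingSol n Rstar T x y θ ∧ t₁ ∈ Set.Ioo 0 T ∧
      x t₁ = y t₁ ∧ θ t₁ = -(5 * Real.pi / 4) ∧
      (∀ t ∈ Set.Ioo 0 t₁, 0 < y t ∧ y t < x t) ∧
      Set.InjOn (fun t => (x t, y t)) (Set.Icc 0 t₁) := by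
  have ha : (1 : ℝ) ≤ n - 1 := by linarith [show (2 : ℝ) ≤ n from mod_cast hn]
  obtain ⟨d, s, φ, T, h, hφT, hzero⟩ := exists_closedExcursion_φ_T_eq_pi ha
  obtain ⟨ε, hε, hprofile⟩ := h.exists_forall_isProfileAt_sub hzero
  have hT := h.T_pos
  refine ⟨s T, T + ε, T, reversedX d s T, reversedY d s T, reversedAngle φ T,
    (h.isProfileAt T h.T_mem).s_pos, shootingSol_reversed (by linarith) h.d_T hφT hprofile,
    ⟨hT, by linarith⟩, ?_, ?_, fun t ht => ⟨?_, ?_⟩, injOn_reversed h.strictMonoOn_s⟩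
  · simp [reversedX, reversedY, h.d_zero]
  · rw [reversedAngle, sub_self, h.φ_zero]
    ring
  · exact (hprofile t ⟨ht.1.le, by linarith [ht.2]⟩).reversedY_pos
  · exact reversedY_lt_reversedX (h.d_pos _ ⟨sub_pos.2 ht.2, sub_lt_self T ht.1⟩)
end

section
/- Let m, n ≥ 2 be integers and let (x, y, θ) be a solution of the self-shrinker profile system on (a, b) such that cos θ(t) ≠ 0 for all t ∈ (a, b) (so the curve is a graph over the x-axis) and lim_{t→b} (x(t), y(t)) = (x_b, 0) with x_b > 0. Then the limits lim_{t→b} x'(t) and lim_{t→b} y'(t) exist, with lim_{t→b} x'(t) = 0 and lim_{t→b} y'(t) = −1; in particular the solution extends continuously to (a, b] and the curve meets the x-axis orthogonally. Analogously, if (x, y, θ) is a solution with sin θ(t) ≠ 0 for all t and lim_{t→b} (x(t), y(t)) = (0, y_b) with y_b > 0, then lim_{t→b} y'(t) = 0 and lim_{t→b} x'(t) = −1, so the curve meets the y-axis orthogonally. -/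
open Set Filter Topology

/-- `(x, y, θ)` solves the self-shrinker profile system
`x' = cos θ`, `y' = sin θ`,
`θ' = (x/2 − (m−1)/x)·sin θ + ((n−1)/y − y/2)·cos θ`, with `x, y > 0`, on the set `S`. -/
def SysSol (m n : ℕ) (x y θ : ℝ → ℝ) (S : Set ℝ) : Prop :=
  ∀ t ∈ S, 0 < x t ∧ 0 < y t ∧
    HasDerivAt x (Real.cos (θ t)) t ∧ HasDerivAt y (Real.sin (θ t)) t ∧
    HasDerivAt θ ((x t / 2 - ((m : ℝ) - 1) / x t) * Real.sin (θ t)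
      + (((n : ℝ) - 1) / y t - y t / 2) * Real.cos (θ t)) t

/-!
Along a profile curve approaching the `x`-axis the height `y` satisfies a differential inequality
`y y'' ≥ κ (1 - y'²) - M y` with `κ = n - 1 > 0`, where `M` bounds the nonsingular terms.
Close to the axis every critical point of `y` is therefore a strict local minimum; as `y > 0` tends
to `0`, this gives `y' < 0`. There the energy `y^(2κ) (1 - y'² - 2M/(2κ+1) y)` is nondecreasing; its
limit is at most `0`, so `1 - y'² ≤ 2M/(2κ+1) y`, and `-1 ≤ y' < 0` forces `y' → -1`.
The reflection `(x, y, θ) ↦ (y, x, π/2 - θ)` exchanges the two axes.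
-/

theorem nonneg_of_hasDerivAt_pos_at_zeros {a b : ℝ} {f f' : ℝ → ℝ}
    (hf' : ∀ t ∈ Ico a b, HasDerivAt f (f' t) t)
    (hzero : ∀ t ∈ Ico a b, f t = 0 → 0 < f' t) (ha : 0 ≤ f a) :
    ∀ t ∈ Ico a b, 0 ≤ f t := by
  intro t ht
  have hsub : ∀ r ∈ Ico a t, r ∈ Ico a b := fun r hr => ⟨hr.1, hr.2.trans ht.2⟩
  exact image_le_of_deriv_right_lt_deriv_boundary' (f := fun _ => 0) (f' := fun _ => 0)
    continuousOn_const (fun _ _ => hasDerivWithinAt_const _ _ _) ha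
    (fun r hr => (hf' r ⟨hr.1, hr.2.trans_lt ht.2⟩).continuousAt.continuousWithinAt)
    (fun r hr => (hf' r (hsub r hr)).hasDerivWithinAt)
    (fun r hr h => hzero r (hsub r hr) h.symm) ⟨ht.1, le_rfl⟩

section HeightInequality

variable {a b κ M : ℝ} {y y' y'' : ℝ → ℝ}

theorem deriv_neg_of_tendsto_of_lt {l : ℝ}
    (hlt : ∀ t ∈ Ioo a b, l < y t)
    (hy' : ∀ t ∈ Ioo a b, HasDerivAt y (y' t) t)
    (hy'' : ∀ t ∈ Ioo a b, HasDerivAt y' (y'' t) t)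
    (hcrit : ∀ t ∈ Ioo a b, y' t = 0 → 0 < y'' t)
    (hlim : Tendsto y (𝓝[<] b) (𝓝 l)) :
    ∀ t ∈ Ioo a b, y' t < 0 := by
  intro t ht
  by_contra! hnonneg
  have hsub : Ico t b ⊆ Ioo a b := fun r hr => ⟨ht.1.trans_le hr.1, hr.2⟩
  have hnonneg' : ∀ r ∈ Ico t b, 0 ≤ y' r :=
    nonneg_of_hasDerivAt_pos_at_zeros (fun r hr => hy'' r (hsub hr))
      (fun r hr => hcrit r (hsub hr)) hnonneg
  have hmono : MonotoneOn y (Ico t b) :=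
    monotoneOn_of_hasDerivWithinAt_nonneg (convex_Ico t b)
      (fun r hr => (hy' r (hsub hr)).continuousAt.continuousWithinAt)
      (fun r hr => (hy' r (hsub (interior_subset hr))).hasDerivWithinAt)
      (fun r hr => hnonneg' r (interior_subset hr))
  have hle : y t ≤ l := ge_of_tendsto hlim <| by
    filter_upwards [Ico_mem_nhdsLT ht.2] with r hr using hmono ⟨le_rfl, ht.2⟩ hr hr.1
  exact hle.not_gt (hlt t ht)

theorem hasDerivAt_rpow_mul_one_sub_sq_sub {t : ℝ} (C : ℝ) (hpos : 0 < y t)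
    (hy' : HasDerivAt y (y' t) t) (hy'' : HasDerivAt y' (y'' t) t) :
    HasDerivAt (fun r => y r ^ (2 * κ) * (1 - y' r ^ 2 - C * y r))
      (-y' t * y t ^ (2 * κ - 1) *
        (2 * (y t * y'' t - κ * (1 - y' t ^ 2)) + (2 * κ + 1) * C * y t)) t := by
  have hpow : y t ^ (2 * κ) = y t ^ (2 * κ - 1) * y t := by
    rw [Real.rpow_sub_one hpos.ne', div_mul_cancel₀ _ hpos.ne']
  refine ((hy'.rpow_const (Or.inl hpos.ne')).mul
    (((hy''.pow 2).const_sub 1).sub (hy'.const_mul C))).congr_deriv ?_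
  simp only [Pi.pow_apply, Pi.sub_apply, hpow]
  ring

theorem monotoneOn_rpow_mul_one_sub_sq_sub (hκ : 2 * κ + 1 ≠ 0)
    (hpos : ∀ t ∈ Ioo a b, 0 < y t)
    (hy' : ∀ t ∈ Ioo a b, HasDerivAt y (y' t) t)
    (hy'' : ∀ t ∈ Ioo a b, HasDerivAt y' (y'' t) t)
    (hineq : ∀ t ∈ Ioo a b, κ * (1 - y' t ^ 2) ≤ y t * (y'' t + M))
    (hneg : ∀ t ∈ Ioo a b, y' t ≤ 0) :
    MonotoneOn (fun t => y t ^ (2 * κ) * (1 - y' t ^ 2 - 2 * M / (2 * κ + 1) * y t))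
      (Ioo a b) := by
  have hderiv := fun t ht =>
    hasDerivAt_rpow_mul_one_sub_sq_sub (κ := κ) (2 * M / (2 * κ + 1)) (hpos t ht) (hy' t ht)
      (hy'' t ht)
  refine monotoneOn_of_hasDerivWithinAt_nonneg (convex_Ioo a b)
    (fun t ht => (hderiv t ht).continuousAt.continuousWithinAt)
    (fun t ht => (hderiv t (interior_subset ht)).hasDerivWithinAt) fun t ht => ?_
  replace ht := interior_subset ht
  rw [mul_div_cancel₀ _ hκ]
  refine mul_nonneg (mul_nonneg (neg_nonneg.2 (hneg t ht)) (Real.rpow_nonneg (hpos t ht).le _)) ?_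
  linarith [hineq t ht]

theorem one_sub_deriv_sq_le_mul (hκ : 0 < κ)
    (hpos : ∀ t ∈ Ioo a b, 0 < y t)
    (hy' : ∀ t ∈ Ioo a b, HasDerivAt y (y' t) t)
    (hy'' : ∀ t ∈ Ioo a b, HasDerivAt y' (y'' t) t)
    (hineq : ∀ t ∈ Ioo a b, κ * (1 - y' t ^ 2) ≤ y t * (y'' t + M))
    (hneg : ∀ t ∈ Ioo a b, y' t ≤ 0)
    (hlim : Tendsto y (𝓝[<] b) (𝓝 0)) :
    ∀ t ∈ Ioo a b, 1 - y' t ^ 2 ≤ 2 * M / (2 * κ + 1) * y t := by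
  intro t ht
  set C := 2 * M / (2 * κ + 1)
  have hmono : MonotoneOn (fun r => y r ^ (2 * κ) * (1 - y' r ^ 2 - C * y r)) (Ioo a b) :=
    monotoneOn_rpow_mul_one_sub_sq_sub (by positivity) hpos hy' hy'' hineq hneg
  have hupper : Tendsto (fun r => y r ^ (2 * κ) * (1 - C * y r)) (𝓝[<] b) (𝓝 0) := by
    have hpow : Tendsto (fun r => y r ^ (2 * κ)) (𝓝[<] b) (𝓝 0) := by
      have hκ' : 0 < 2 * κ := by positivity
      simpa only [Real.zero_rpow hκ'.ne'] using hlim.rpow_const (Or.inr hκ'.le)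
    simpa using hpow.mul ((hlim.const_mul C).const_sub 1)
  have henergy : y t ^ (2 * κ) * (1 - y' t ^ 2 - C * y t) ≤ 0 := ge_of_tendsto hupper <| by
    filter_upwards [Ioo_mem_nhdsLT ht.2] with r hr
    have hr' : r ∈ Ioo a b := ⟨ht.1.trans hr.1, hr.2⟩
    refine (hmono ht hr' hr.1.le).trans ?_
    exact mul_le_mul_of_nonneg_left (by linarith [sq_nonneg (y' r)])
      (Real.rpow_nonneg (hpos r hr').le _)
  linarith [nonpos_of_mul_nonpos_right henergy (Real.rpow_pos_of_pos (hpos t ht) _)]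

theorem tendsto_deriv_neg_one_of_tendsto_zero (hκ : 0 < κ)
    (hpos : ∀ᶠ t in 𝓝[<] b, 0 < y t)
    (hy' : ∀ᶠ t in 𝓝[<] b, HasDerivAt y (y' t) t)
    (hy'' : ∀ᶠ t in 𝓝[<] b, HasDerivAt y' (y'' t) t)
    (hineq : ∀ᶠ t in 𝓝[<] b, κ * (1 - y' t ^ 2) ≤ y t * (y'' t + M))
    (hbound : ∀ᶠ t in 𝓝[<] b, -1 ≤ y' t)
    (hlim : Tendsto y (𝓝[<] b) (𝓝 0)) :
    Tendsto y' (𝓝[<] b) (𝓝 (-1)) := by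
  have hsmall : ∀ᶠ t in 𝓝[<] b, y t * M < κ :=
    (hlim.mul_const M).eventually (gt_mem_nhds (by simpa using hκ))
  obtain ⟨a, hab, hnear⟩ := mem_nhdsLT_iff_exists_Ioo_subset.1
    (hpos.and (hy'.and (hy''.and (hineq.and hsmall))))
  replace hab : a < b := hab
  choose hpos hy' hy'' hineq hsmall using fun t (ht : t ∈ Ioo a b) => hnear ht
  have hcrit : ∀ t ∈ Ioo a b, y' t = 0 → 0 < y'' t := by
    intro t ht hzero
    have hprod : 0 < y t * y'' t := by
      have := hineq t ht
      rw [hzero] at this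
      linarith [hsmall t ht]
    exact pos_of_mul_pos_right hprod (hpos t ht).le
  have hneg := deriv_neg_of_tendsto_of_lt hpos hy' hy'' hcrit hlim
  have hsq := one_sub_deriv_sq_le_mul hκ hpos hy' hy'' hineq (fun t ht => (hneg t ht).le) hlim
  have hupper : Tendsto (fun t => -1 + 2 * M / (2 * κ + 1) * y t) (𝓝[<] b) (𝓝 (-1)) := by
    simpa using (hlim.const_mul (2 * M / (2 * κ + 1))).const_add (-1)
  refine tendsto_of_tendsto_of_tendsto_of_le_of_le' tendsto_const_nhds hupper hbound ?_
  filter_upwards [Ioo_mem_nhdsLT hab, hbound] with t ht hlower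
  nlinarith [hsq t ht, hneg t ht]

end HeightInequality

theorem tendsto_cos_zero_of_tendsto_sin_neg_one {α : Type*} {l : Filter α} {θ : α → ℝ}
    (h : Tendsto (fun t => Real.sin (θ t)) l (𝓝 (-1))) :
    Tendsto (fun t => Real.cos (θ t)) l (𝓝 0) := by
  rw [tendsto_zero_iff_abs_tendsto_zero]
  simpa [Function.comp_def, Real.abs_cos_eq_sqrt_one_sub_sin_sq] using ((h.pow 2).const_sub 1).sqrt

theorem mul_one_sub_sin_sq_le {y ν M : ℝ} (θ p : ℝ) (hy : 0 < y) (hM : |p| + y / 2 ≤ M) :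
    ν * (1 - Real.sin θ ^ 2) ≤
      y * (Real.cos θ * (p * Real.sin θ + (ν / y - y / 2) * Real.cos θ) + M) := by
  have hp : |p * (Real.sin θ * Real.cos θ)| ≤ |p| := by
    rw [abs_mul, abs_mul]
    exact mul_le_of_le_one_right (abs_nonneg p)
      (mul_le_one₀ (Real.abs_sin_le_one θ) (abs_nonneg _) (Real.abs_cos_le_one θ))
  have hcos : y / 2 * Real.cos θ ^ 2 ≤ y / 2 :=
    mul_le_of_le_one_right (by positivity) (Real.cos_sq_le_one θ)
  have hnonneg : 0 ≤ p * (Real.sin θ * Real.cos θ) - y / 2 * Real.cos θ ^ 2 + M := by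
    linarith [(abs_le.1 hp).1]
  calc ν * (1 - Real.sin θ ^ 2)
      = ν * Real.cos θ ^ 2 := by rw [Real.cos_sq']
    _ ≤ ν * Real.cos θ ^ 2 +
          y * (p * (Real.sin θ * Real.cos θ) - y / 2 * Real.cos θ ^ 2 + M) :=
        le_add_of_nonneg_right (mul_nonneg hy.le hnonneg)
    _ = y * (Real.cos θ * (p * Real.sin θ + (ν / y - y / 2) * Real.cos θ) + M) := by
        field_simp
        ring

namespace SysSol

variable {m n : ℕ} {x y θ : ℝ → ℝ}

theorem swap {S : Set ℝ} (hsol : SysSol m n x y θ S) :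
    SysSol n m y x (fun t => Real.pi / 2 - θ t) S := by
  intro t ht
  obtain ⟨hx, hy, hx', hy', hθ'⟩ := hsol t ht
  simp only [Real.cos_pi_div_two_sub, Real.sin_pi_div_two_sub]
  exact ⟨hy, hx, hy', hx', (hθ'.const_sub (Real.pi / 2)).congr_deriv (by ring)⟩

theorem tendsto_sin_neg_one {a b xb : ℝ} (hsol : SysSol m n x y θ (Ioo a b)) (hn : 2 ≤ n)
    (hab : a < b) (hxb : xb ≠ 0) (hx : Tendsto x (𝓝[<] b) (𝓝 xb))
    (hy : Tendsto y (𝓝[<] b) (𝓝 0)) :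
    Tendsto (fun t => Real.sin (θ t)) (𝓝[<] b) (𝓝 (-1)) := by
  have hn' : (1 : ℝ) < n := by exact_mod_cast hn
  have hpert : Tendsto (fun t => |x t / 2 - ((m : ℝ) - 1) / x t| + y t / 2) (𝓝[<] b)
      (𝓝 (|xb / 2 - ((m : ℝ) - 1) / xb| + 0 / 2)) :=
    ((hx.div_const 2).sub (tendsto_const_nhds.div hx hxb)).abs.add (hy.div_const 2)
  obtain ⟨M, hM⟩ := hpert.isBoundedUnder_le
  rw [eventually_map] at hM
  have hnear : ∀ᶠ t in 𝓝[<] b, t ∈ Ioo a b := Ioo_mem_nhdsLT hab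
  refine tendsto_deriv_neg_one_of_tendsto_zero (M := M) (sub_pos.2 hn')
    (hnear.mono fun t ht => (hsol t ht).2.1)
    (hnear.mono fun t ht => (hsol t ht).2.2.2.1)
    (hnear.mono fun t ht => (hsol t ht).2.2.2.2.sin) ?_
    (Eventually.of_forall fun t => Real.neg_one_le_sin (θ t)) hy
  filter_upwards [hnear, hM] with t ht hMt
  exact mul_one_sub_sin_sq_le (θ t) _ (hsol t ht).2.1 hMt

theorem tendsto_cos_sin_of_tendsto_axis {a b xb : ℝ} (hsol : SysSol m n x y θ (Ioo a b))
    (hn : 2 ≤ n) (hab : a < b) (hxb : xb ≠ 0)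
    (hlim : Tendsto (fun t => (x t, y t)) (𝓝[Ioo a b] b) (𝓝 (xb, 0))) :
    Tendsto (fun t => Real.cos (θ t)) (𝓝[Ioo a b] b) (𝓝 0) ∧
      Tendsto (fun t => Real.sin (θ t)) (𝓝[Ioo a b] b) (𝓝 (-1)) := by
  rw [nhdsWithin_Ioo_eq_nhdsLT hab] at hlim ⊢
  have hsin := hsol.tendsto_sin_neg_one hn hab hxb hlim.fst_nhds hlim.snd_nhds
  exact ⟨tendsto_cos_zero_of_tendsto_sin_neg_one hsin, hsin⟩

end SysSol

theorem profile_sol_meets_axes_orthogonally_general (m n : ℕ) (a b : ℝ) (hab : a < b)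
    (x y θ : ℝ → ℝ) (hsol : SysSol m n x y θ (Ioo a b)) :
    (2 ≤ n →
      ∀ xb : ℝ, 0 < xb →
        Tendsto (fun t => (x t, y t)) (𝓝[Ioo a b] b) (𝓝 (xb, 0)) →
        Tendsto (fun t => Real.cos (θ t)) (𝓝[Ioo a b] b) (𝓝 0) ∧
        Tendsto (fun t => Real.sin (θ t)) (𝓝[Ioo a b] b) (𝓝 (-1))) ∧
    (2 ≤ m →
      ∀ yb : ℝ, 0 < yb →
        Tendsto (fun t => (x t, y t)) (𝓝[Ioo a b] b) (𝓝 (0, yb)) →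
        Tendsto (fun t => Real.sin (θ t)) (𝓝[Ioo a b] b) (𝓝 0) ∧
        Tendsto (fun t => Real.cos (θ t)) (𝓝[Ioo a b] b) (𝓝 (-1))) := by
  refine ⟨fun hn xb hxb hlim => hsol.tendsto_cos_sin_of_tendsto_axis hn hab hxb.ne' hlim,
    fun hm yb hyb hlim => ?_⟩
  simpa only [Real.cos_pi_div_two_sub, Real.sin_pi_div_two_sub] using
    hsol.swap.tendsto_cos_sin_of_tendsto_axis hm hab hyb.ne'
      (hlim.snd_nhds.prodMk_nhds hlim.fst_nhds)

/-- a solution of the self-shrinker profile system on `(a, b)` which is a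
graph over the `x`-axis (`cos θ ≠ 0`) and limits to a point `(x_b, 0)` with `x_b > 0`
on the `x`-axis satisfies `x' = cos θ → 0` and `y' = sin θ → −1` as `t → b`; in
particular it extends continuously and meets the `x`-axis orthogonally. Analogously for
the `y`-axis: if `sin θ ≠ 0` and `(x, y) → (0, y_b)` with `y_b > 0`, then `sin θ → 0`
and `cos θ → −1`. -/
theorem profile_sol_meets_axes_orthogonally (m n : ℕ) (hm : 2 ≤ m) (hn : 2 ≤ n)
    (a b : ℝ) (hab : a < b) (x y θ : ℝ → ℝ)
    (hsol : SysSol m n x y θ (Ioo a b)) :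
    ((∀ t ∈ Ioo a b, Real.cos (θ t) ≠ 0) →
      ∀ xb : ℝ, 0 < xb →
        Tendsto (fun t => (x t, y t)) (𝓝[Ioo a b] b) (𝓝 (xb, 0)) →
        Tendsto (fun t => Real.cos (θ t)) (𝓝[Ioo a b] b) (𝓝 0) ∧
        Tendsto (fun t => Real.sin (θ t)) (𝓝[Ioo a b] b) (𝓝 (-1))) ∧
    ((∀ t ∈ Ioo a b, Real.sin (θ t) ≠ 0) →
      ∀ yb : ℝ, 0 < yb →
        Tendsto (fun t => (x t, y t)) (𝓝[Ioo a b] b) (𝓝 (0, yb)) →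
        Tendsto (fun t => Real.sin (θ t)) (𝓝[Ioo a b] b) (𝓝 0) ∧
        Tendsto (fun t => Real.cos (θ t)) (𝓝[Ioo a b] b) (𝓝 (-1))) := by
  have h := profile_sol_meets_axes_orthogonally_general m n a b hab x y θ hsol
  exact ⟨fun _ => h.1 hn, fun _ => h.2 hm⟩
end
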